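/- There exists ε > 0 such that for every real q ∈ (1/2-ε, 1/2), writing t = 1-2q, a = a(q), v = v(q), γ = γ(q), the following identities hold: PA(q) = D(q) - q² A(q) · ( (a;q)_∞ (v;q)_∞ / ((q;q)_∞ (av;q)_∞) ) · T(q), and T(q) = (1-2q)^{-γ} · Π( log(1-2q)/log(1/q) ) · U(q) + V(q), where Π(w) = ∑_{k∈ℤ} p_k e^{-2πikw} with p_k = π / sin(πγ + 2ikπ²/log(1/q)), U(q) = (v q^{3γ-2}/log(1/q)) · (-q^{-1}t;q)_∞ / (-a q^{-2}t;q)_∞, and V(q) = -((q;q)_∞/(a;q)_∞) · q^{-2}/(1+q^{-2}t) + q^{-2} ( (q;q)_∞ (av;q)_∞ / ((a;q)_∞ (v;q)_∞) ) · ∑_{r=0}^∞ [ (a^{-1}v^{-1}q;q)_r / (v^{-1}q;q)_r ] (-a q^{-2} t)^r. -/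

import Mathlib

open Complex Filter Asymptotics Topology

noncomputable section

/-- finite q-Pochhammer symbol `(x;q)_n` -/
def qPF (x q : ℂ) (n : ℕ) : ℂ := ∏ i ∈ Finset.range n, (1 - x * q ^ i)

/-- infinite q-Pochhammer symbol `(x;q)_∞` -/
def qPI (x q : ℂ) : ℂ := ∏' i : ℕ, (1 - x * q ^ i)

def uF (q : ℂ) : ℂ := q / (1 - q)
def vF (q : ℂ) : ℂ := (1 - q + q ^ 2) / (1 - q)
def aF (q : ℂ) : ℂ := q ^ 2 / (1 - q + q ^ 2)
def AF (q : ℂ) : ℂ := 2 * q * (1 - q) ^ 2 / (1 - 2 * q) ^ 2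
def CF (q : ℂ) : ℂ := 2 * q * (3 - 10 * q + 9 * q ^ 2 - q ^ 3) / ((1 - q) * (1 - 2 * q) ^ 2)
def DF (q : ℂ) : ℂ := CF q - (q ^ 2 / (1 - q) ^ 2) * AF q * qPI (vF q) q / qPI (aF q * vF q) q

/-- the `m`-th term (for `m ≥ 1`) of the explicit series for `PA(q)` -/
def PAterm (q : ℂ) (m : ℕ) : ℂ :=
  (-1) ^ m * q ^ (2 * m) / ((1 - 2 * q) ^ m * (1 - q - q ^ (m + 1))) *
    ∏ k ∈ Finset.Icc 1 (m - 1),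
      ((1 - q - q ^ k + q ^ (k + 1) - q ^ (k + 2)) / (1 - q - q ^ (k + 1)))

/-- the explicit convergent series defining `PA(q)` for small `q` -/
def PAseries (q : ℂ) : ℂ :=
  (-2 * q ^ 3 * (1 - q) ^ 2 / (1 - 2 * q) ^ 2) * (∑' m : ℕ, PAterm q (m + 1))
    + 2 * q * (3 - 10 * q + 9 * q ^ 2 - q ^ 3) / ((1 - 2 * q) ^ 2 * (1 - q))

/-- the `(ν,j)` term (for `ν ≥ 1`, `j ≥ 0`) of the double sum `T(q)` -/
def Tterm (q : ℂ) (ν j : ℕ) : ℂ :=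
  (qPF (aF q * q ^ (-(j : ℤ))) q j / qPF (q ^ (-(j : ℤ))) q j) *
    (vF q ^ ν * q ^ ((j + 1) * ν) / (1 - 2 * q + q ^ (ν + 2)))

/-- real version of `v(q)` -/
def vR (q : ℝ) : ℝ := (1 - q + q ^ 2) / (1 - q)

/-- real version of `a(q)` -/
def aR (q : ℝ) : ℝ := q ^ 2 / (1 - q + q ^ 2)

/-- `γ(q) = log v(q) / log(1/q)` -/
def gammaR (q : ℝ) : ℝ := Real.log (vR q) / Real.log (1 / q)

/-- the Fourier coefficient `p_k = π / sin(πγ + 2ikπ²/log(1/q))` -/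
def pcoefR (q : ℝ) (k : ℤ) : ℂ :=
  (Real.pi : ℂ) / Complex.sin ((Real.pi : ℂ) * (gammaR q : ℂ) +
    2 * Complex.I * (k : ℂ) * (Real.pi : ℂ) ^ 2 / (Real.log (1 / q) : ℂ))

/-- the Fourier series `Π(w) = ∑_{k∈ℤ} p_k e^{-2πikw}` -/
def PiR (q : ℝ) (w : ℝ) : ℂ :=
  ∑' k : ℤ, pcoefR q k * Complex.exp (-2 * (Real.pi : ℂ) * Complex.I * (k : ℂ) * (w : ℂ))

/-- the singular series `U(q) = (v q^{3γ-2}/log(1/q)) (-q⁻¹t;q)_∞/(-a q⁻²t;q)_∞`,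
with `t = 1-2q` -/
def Ufun (q : ℝ) : ℂ :=
  ((vR q * q ^ (3 * gammaR q - 2) / Real.log (1 / q) : ℝ) : ℂ) *
    (qPI (-(((1 - 2 * q) / q : ℝ) : ℂ)) (q : ℂ) /
      qPI (-((aR q * (1 - 2 * q) / q ^ 2 : ℝ) : ℂ)) (q : ℂ))

/-- the `r`-th term of the series in the regular series `V(q)` -/
def Vterm (q : ℝ) (r : ℕ) : ℂ :=
  (qPF ((aF q)⁻¹ * (vF q)⁻¹ * q) (q : ℂ) r / qPF ((vF q)⁻¹ * q) (q : ℂ) r) *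
    (-(aF q) * (1 - 2 * (q : ℂ)) / (q : ℂ) ^ 2) ^ r

/-- the regular series `V(q)` -/
def Vfun (q : ℝ) : ℂ :=
  -(qPI (q : ℂ) (q : ℂ) / qPI (aF q) (q : ℂ)) *
      ((1 / (q : ℂ) ^ 2) / (1 + (1 - 2 * (q : ℂ)) / (q : ℂ) ^ 2)) +
    (1 / (q : ℂ) ^ 2) *
      (qPI (q : ℂ) (q : ℂ) * qPI (aF q * vF q) (q : ℂ) /
        (qPI (aF q) (q : ℂ) * qPI (vF q) (q : ℂ))) *
      ∑' r : ℕ, Vterm q r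

lemma qPF_zero (x q : ℂ) : qPF x q 0 = 1 := by simp [qPF]

lemma qPF_succ (x q : ℂ) (n : ℕ) : qPF x q (n + 1) = qPF x q n * (1 - x * q ^ n) := by
  simp [qPF, Finset.prod_range_succ]

lemma qPF_succ' (x q : ℂ) (n : ℕ) : qPF x q (n + 1) = (1 - x) * qPF (x * q) q n := by
  rw [qPF, Finset.prod_range_succ', mul_comm]
  simp only [pow_zero, mul_one, qPF]
  congr 1
  refine Finset.prod_congr rfl fun i _ => ?_
  ring

lemma norm_mul_pow_lt_one {x q : ℂ} (hq : ‖q‖ < 1) (hx : ‖x‖ < 1) (i : ℕ) : ‖x * q ^ i‖ < 1 := by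
  rw [norm_mul, norm_pow]
  calc ‖x‖ * ‖q‖ ^ i ≤ ‖x‖ * 1 := by
        gcongr; exact pow_le_one₀ (norm_nonneg _) hq.le
    _ < 1 := by simpa using hx

lemma one_sub_ne_zero_of_norm {w : ℂ} (hw : ‖w‖ < 1) : 1 - w ≠ 0 := by
  intro h
  have : w = 1 := by linear_combination -h
  simp [this] at hw

lemma qPF_ne_zero {x q : ℂ} (hq : ‖q‖ < 1) (hx : ‖x‖ < 1) (n : ℕ) : qPF x q n ≠ 0 :=
  Finset.prod_ne_zero_iff.mpr fun i _ => one_sub_ne_zero_of_norm (norm_mul_pow_lt_one hq hx i)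

lemma summable_qPI {q : ℂ} (hq : ‖q‖ < 1) (x : ℂ) : Summable fun i : ℕ => ‖-(x * q ^ i)‖ := by
  simp only [norm_neg, norm_mul, norm_pow]
  exact (summable_geometric_of_lt_one (norm_nonneg _) hq).mul_left _

lemma multipliable_qPI {q : ℂ} (hq : ‖q‖ < 1) (x : ℂ) :
    Multipliable fun i : ℕ => (1 - x * q ^ i) := by
  simpa [sub_eq_add_neg] using multipliable_one_add_of_summable (summable_qPI hq x)

lemma qPI_ne_zero' {x q : ℂ} (hq : ‖q‖ < 1) (hx : ∀ i : ℕ, 1 - x * q ^ i ≠ 0) : qPI x q ≠ 0 := by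
  have := tprod_one_add_ne_zero_of_summable (f := fun i : ℕ => -(x * q ^ i))
    (by simpa [sub_eq_add_neg] using hx) (summable_qPI hq x)
  simpa [qPI, sub_eq_add_neg] using this

lemma qPI_ne_zero {x q : ℂ} (hq : ‖q‖ < 1) (hx : ‖x‖ < 1) : qPI x q ≠ 0 :=
  qPI_ne_zero' hq fun i => one_sub_ne_zero_of_norm (norm_mul_pow_lt_one hq hx i)

lemma tendsto_qPF {q : ℂ} (hq : ‖q‖ < 1) (x : ℂ) :
    Tendsto (fun n => qPF x q n) atTop (𝓝 (qPI x q)) :=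
  (multipliable_qPI hq x).hasProd.tendsto_prod_nat

lemma qPI_eq {q : ℂ} (hq : ‖q‖ < 1) (x : ℂ) : qPI x q = (1 - x) * qPI (x * q) q := by
  refine tendsto_nhds_unique ((tendsto_add_atTop_iff_nat 1).mpr (tendsto_qPF hq x)) ?_
  simp_rw [qPF_succ']
  exact (tendsto_qPF hq _).const_mul _

lemma qPI_eq_n {q : ℂ} (hq : ‖q‖ < 1) (x : ℂ) (n : ℕ) :
    qPI x q = qPF x q n * qPI (x * q ^ n) q := by
  induction n with
  | zero => simp [qPF_zero]
  | succ n ih =>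
    rw [ih, qPF_succ, qPI_eq hq (x * q ^ n), pow_succ]
    ring_nf

lemma qratio_bound {b c q : ℂ} {r ρ B : ℝ} (hr : r < 1) (hρ : ρ < 1) (hq : ‖q‖ ≤ r) (hc : ‖c‖ ≤ ρ)
    (hb : ‖b‖ ≤ B) (n : ℕ) :
    ‖qPF b q n / qPF c q n‖ ≤ Real.exp ((B + 1) / (1 - ρ) * (1 - r)⁻¹) := by
  have hr0 : 0 ≤ r := (norm_nonneg _).trans hq
  have hρ0 : 0 ≤ ρ := (norm_nonneg _).trans hc
  have hB0 : 0 ≤ B := (norm_nonneg _).trans hb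
  have h1ρ : 0 < 1 - ρ := by linarith
  have key : ∀ i : ℕ, ‖(1 - b * q ^ i) / (1 - c * q ^ i)‖ ≤ 1 + (B + 1) / (1 - ρ) * r ^ i := by
    intro i
    have hqi : ‖q ^ i‖ ≤ r ^ i := by rw [norm_pow]; gcongr
    have hqi1 : ‖q ^ i‖ ≤ 1 := hqi.trans (pow_le_one₀ hr0 hr.le)
    have hcq : ‖c * q ^ i‖ ≤ ρ := by
      rw [norm_mul]
      calc ‖c‖ * ‖q ^ i‖ ≤ ρ * 1 := by gcongr
        _ = ρ := mul_one _
    have hne : 1 - c * q ^ i ≠ 0 := one_sub_ne_zero_of_norm (hcq.trans_lt hρ)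
    have hden : 1 - ρ ≤ ‖1 - c * q ^ i‖ := by
      have := norm_sub_norm_le (1 : ℂ) (c * q ^ i)
      rw [norm_one] at this
      linarith
    have e : (1 - b * q ^ i) / (1 - c * q ^ i) = 1 + (c - b) * q ^ i / (1 - c * q ^ i) := by
      rw [div_eq_iff hne, add_mul, div_mul_cancel₀ _ hne]; ring
    rw [e]
    refine (norm_add_le _ _).trans ?_
    rw [norm_one, norm_div, norm_mul]
    have hcb : ‖c - b‖ ≤ B + 1 := (norm_sub_le _ _).trans (by linarith)
    have : ‖c - b‖ * ‖q ^ i‖ / ‖1 - c * q ^ i‖ ≤ (B + 1) * r ^ i / (1 - ρ) := by gcongr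
    calc 1 + ‖c - b‖ * ‖q ^ i‖ / ‖1 - c * q ^ i‖ ≤ 1 + (B + 1) * r ^ i / (1 - ρ) := by gcongr
      _ = _ := by ring
  rw [qPF, qPF, ← Finset.prod_div_distrib, norm_prod]
  calc ∏ i ∈ Finset.range n, ‖(1 - b * q ^ i) / (1 - c * q ^ i)‖
      ≤ ∏ i ∈ Finset.range n, (1 + (B + 1) / (1 - ρ) * r ^ i) :=
        Finset.prod_le_prod (fun _ _ => norm_nonneg _) fun i _ => key i
    _ ≤ Real.exp (∑ i ∈ Finset.range n, (B + 1) / (1 - ρ) * r ^ i) :=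
        Real.prod_one_add_le_exp_sum _ (fun i => by positivity)
    _ ≤ _ := by
        apply Real.exp_le_exp.mpr
        rw [← Finset.mul_sum]
        gcongr
        rw [← tsum_geometric_of_lt_one hr0 hr]
        exact (summable_geometric_of_lt_one hr0 hr).sum_le_tsum _ (fun i _ => by positivity)

lemma qratio_bound' {b c q : ℂ} (hq : ‖q‖ < 1) (hc : ‖c‖ < 1) :
    ∃ M : ℝ, 0 < M ∧ ∀ n, ‖qPF b q n / qPF c q n‖ ≤ M :=
  ⟨_, Real.exp_pos _, qratio_bound hq hc le_rfl le_rfl le_rfl⟩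

lemma summable_qbin {a c q z : ℂ} (hq : ‖q‖ < 1) (hc : ‖c‖ < 1) (hz : ‖z‖ < 1) :
    Summable fun n => ‖qPF a q n / qPF c q n * z ^ n‖ := by
  obtain ⟨M, hM, h⟩ := qratio_bound' (b := a) hq hc
  refine Summable.of_nonneg_of_le (fun _ => norm_nonneg _) (fun n => ?_)
    ((summable_geometric_of_lt_one (norm_nonneg z) hz).mul_left M)
  rw [norm_mul, norm_pow]
  gcongr
  exact h n

/-- continuity of the power series at zero along the geometric sequence -/
lemma tendsto_qbin {a c q z : ℂ} (hq : ‖q‖ < 1) (hc : ‖c‖ < 1) (hz : ‖z‖ < 1) :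
    Tendsto (fun N : ℕ => ∑' n, qPF a q n / qPF c q n * (z * q ^ N) ^ n) atTop (𝓝 1) := by
  have h0 : ∑' n, qPF a q n / qPF c q n * (0 : ℂ) ^ n = 1 := by
    rw [tsum_eq_single 0]
    · simp [qPF_zero]
    · intro n hn; simp [hn]
  rw [← h0]
  refine tendsto_tsum_of_dominated_convergence (summable_qbin (a := a) hq hc hz) ?_ ?_
  · intro n
    refine Tendsto.const_mul _ (Tendsto.pow ?_ n)
    have := (tendsto_pow_atTop_nhds_zero_of_norm_lt_one hq).const_mul z
    simpa using this
  · filter_upwards with N n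
    rw [norm_mul, norm_mul, norm_pow, norm_pow]
    gcongr
    rw [norm_mul, norm_pow]
    exact mul_le_of_le_one_right (norm_nonneg _) (pow_le_one₀ (norm_nonneg _) hq.le)

lemma qbin_step {a q z : ℂ} (hq : ‖q‖ < 1) (hz : ‖z‖ < 1) :
    (1 - z) * ∑' n, qPF a q n / qPF q q n * z ^ n =
      (1 - a * z) * ∑' n, qPF a q n / qPF q q n * (z * q) ^ n := by
  set c : ℕ → ℂ := fun n => qPF a q n / qPF q q n with hcdef
  have hne : ∀ n, qPF q q n ≠ 0 := qPF_ne_zero hq hq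
  have hrec : ∀ n, c (n + 1) * (1 - q ^ (n + 1)) = c n * (1 - a * q ^ n) := by
    intro n
    have h1 := hne n
    have h2 := hne (n + 1)
    rw [qPF_succ] at h2
    simp only [hcdef]
    rw [qPF_succ, qPF_succ, div_mul_eq_mul_div, div_mul_eq_mul_div, div_eq_div_iff h2 h1]
    ring
  have hzq : ‖z * q‖ < 1 := by simpa using norm_mul_pow_lt_one hq hz 1
  have s1 : Summable fun n => c n * z ^ n := (summable_qbin (a := a) hq hq hz).of_norm
  have s2 : Summable fun n => c n * (z * q) ^ n := (summable_qbin (a := a) hq hq hzq).of_norm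
  have e1 : ∑' n, c n * z ^ n - ∑' n, c n * (z * q) ^ n =
      z * ∑' n, c n * z ^ n - a * z * ∑' n, c n * (z * q) ^ n := by
    rw [← s1.tsum_sub s2, ← tsum_mul_left, ← tsum_mul_left,
      ← (s1.mul_left z).tsum_sub (s2.mul_left (a * z)), (s1.sub s2).tsum_eq_zero_add]
    simp only [pow_zero, sub_self, zero_add]
    refine tsum_congr fun n => ?_
    have := hrec n
    simp only [mul_pow, pow_succ] at this ⊢
    linear_combination z ^ n * z * this
  linear_combination e1

theorem qbinomial {a q z : ℂ} (hq : ‖q‖ < 1) (hz : ‖z‖ < 1) :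
    ∑' n, qPF a q n / qPF q q n * z ^ n = qPI (a * z) q / qPI z q := by
  have hit : ∀ N : ℕ, qPF z q N * ∑' n, qPF a q n / qPF q q n * z ^ n =
      qPF (a * z) q N * ∑' n, qPF a q n / qPF q q n * (z * q ^ N) ^ n := by
    intro N
    induction N with
    | zero => simp [qPF_zero]
    | succ N ih =>
      have := qbin_step (a := a) hq (norm_mul_pow_lt_one hq hz N)
      rw [mul_assoc z, ← pow_succ] at this
      rw [qPF_succ, qPF_succ]
      linear_combination (1 - z * q ^ N) * ih + qPF (a * z) q N * this
  have h1 := (tendsto_qPF hq z).mul_const (∑' n, qPF a q n / qPF q q n * z ^ n)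
  have h2 := (tendsto_qPF hq (a * z)).mul (tendsto_qbin (a := a) hq hq hz)
  simp_rw [hit] at h1
  have := tendsto_nhds_unique h1 h2
  rw [eq_div_iff (qPI_ne_zero hq hz), mul_comm, this, mul_one]

/-- the terms of the simple series for the analytic continuation of `PA` -/
def Sterm (q : ℂ) (ν : ℕ) : ℂ :=
  qPF (aF q) q ν / qPF q q ν * (vF q * q) ^ ν / (1 - 2 * q + q ^ (ν + 2))

/-- the analytic continuation of `PA` -/
def fPA (q : ℂ) : ℂ :=
  CF q - q ^ 2 * AF q * (qPI (vF q) q / qPI (aF q * vF q) q) * ∑' ν, Sterm q ν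

section half
variable {q : ℂ} (hq : ‖q‖ < 1 / 2)
include hq

lemma hf_one_sub : 1 / 2 ≤ ‖1 - q‖ := by
  have := norm_sub_norm_le (1 : ℂ) q
  rw [norm_one] at this
  linarith

lemma hf_one_sub_ne : 1 - q ≠ 0 := by
  have := hf_one_sub hq
  intro h
  rw [h, norm_zero] at this
  linarith

lemma hf_sq : ‖q ^ 2‖ ≤ 1 / 4 := by
  rw [norm_pow]
  nlinarith [norm_nonneg q]

lemma hf_den : 1 / 4 ≤ ‖1 - q + q ^ 2‖ := by
  have h1 := hf_one_sub hq
  have h2 := hf_sq hq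
  have := norm_sub_norm_le (1 - q) (-q ^ 2)
  rw [norm_neg, sub_neg_eq_add] at this
  linarith

lemma hf_den_ne : 1 - q + q ^ 2 ≠ 0 := by
  have := hf_den hq
  intro h
  rw [h, norm_zero] at this
  linarith

lemma hf_av_eq : aF q * vF q = q ^ 2 / (1 - q) := by
  have := hf_den_ne hq
  have := hf_one_sub_ne hq
  rw [aF, vF]
  field_simp

lemma hf_v_eq : vF q = 1 + q ^ 2 / (1 - q) := by
  have := hf_one_sub_ne hq
  rw [vF]
  field_simp

lemma hf_av : ‖aF q * vF q‖ ≤ 1 / 2 := by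
  rw [hf_av_eq hq, norm_div]
  have h1 := hf_one_sub hq
  have h2 := hf_sq hq
  rw [div_le_iff₀ (by linarith)]
  linarith

lemma hf_v : ‖vF q‖ ≤ 3 / 2 := by
  rw [hf_v_eq hq]
  refine (norm_add_le _ _).trans ?_
  have := hf_av hq
  rw [hf_av_eq hq] at this
  rw [norm_one]
  linarith

lemma hf_vq : ‖vF q * q‖ ≤ 3 / 4 := by
  rw [norm_mul]
  have := hf_v hq
  nlinarith [norm_nonneg q, norm_nonneg (vF q)]

lemma hf_a : ‖aF q‖ ≤ 1 := by
  rw [aF, norm_div]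
  have h1 := hf_den hq
  have h2 := hf_sq hq
  rw [div_le_iff₀ (by linarith)]
  linarith

lemma hf_lt : ‖q‖ < 1 := by linarith

end half

lemma hf_ratio : ∃ M : ℝ, 0 < M ∧ ∀ q : ℂ, ‖q‖ < 1 / 2 → ∀ n, ‖qPF (aF q) q n / qPF q q n‖ ≤ M :=
  ⟨_, Real.exp_pos _, fun _ hq => qratio_bound (r := 1 / 2) (ρ := 1 / 2) (B := 1) (by norm_num)
    (by norm_num) hq.le hq.le (hf_a hq)⟩

lemma Sterm_bound : ∃ M : ℝ, 0 < M ∧ ∀ q : ℂ, ‖q‖ < 1 / 2 → ∀ δ : ℝ, 0 < δ → ∀ n,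
    δ ≤ ‖1 - 2 * q + q ^ (n + 2)‖ → ‖Sterm q n‖ ≤ M / δ * (3 / 4) ^ n := by
  obtain ⟨M, hM, h⟩ := hf_ratio
  refine ⟨M, hM, fun q hq δ hδ n hn => ?_⟩
  rw [Sterm, norm_div, norm_mul, norm_pow]
  have h1 := h q hq n
  have h2 := hf_vq hq
  calc ‖qPF (aF q) q n / qPF q q n‖ * ‖vF q * q‖ ^ n / ‖1 - 2 * q + q ^ (n + 2)‖
      ≤ M * (3 / 4) ^ n / δ := by gcongr
    _ = _ := by ring

lemma pow_sub_bound {q x : ℂ} (hq : ‖q‖ ≤ 1 / 2) (hx : ‖x‖ ≤ 1 / 2) (n : ℕ) :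
    ‖q ^ (n + 2) - x ^ (n + 2)‖ ≤ ‖q - x‖ := by
  suffices h : ∀ n : ℕ, ‖q ^ (n + 1) - x ^ (n + 1)‖ ≤ (n + 1) * (1 / 2) ^ n * ‖q - x‖ by
    refine (h (n + 1)).trans ?_
    have h2 : ((n + 1 : ℕ) + 1 : ℝ) * (1 / 2) ^ (n + 1) ≤ 1 := by
      have : ((n + 1 : ℕ) + 1 : ℝ) ≤ 2 ^ (n + 1) := by
        exact_mod_cast Nat.lt_two_pow_self (n := n + 1)
      rw [one_div, inv_pow, ← div_eq_mul_inv, div_le_one (by positivity)]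
      exact this
    exact mul_le_of_le_one_left (norm_nonneg _) h2
  intro n
  induction n with
  | zero => simp
  | succ n ih =>
    have e : q ^ (n + 1 + 1) - x ^ (n + 1 + 1) = q * (q ^ (n + 1) - x ^ (n + 1)) + (q - x) * x ^ (n + 1) := by
      ring
    rw [e]
    refine (norm_add_le _ _).trans ?_
    rw [norm_mul, norm_mul, norm_pow]
    calc ‖q‖ * ‖q ^ (n + 1) - x ^ (n + 1)‖ + ‖q - x‖ * ‖x‖ ^ (n + 1)
        ≤ 1 / 2 * ((n + 1) * (1 / 2) ^ n * ‖q - x‖) + ‖q - x‖ * (1 / 2) ^ (n + 1) := by gcongr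
      _ = _ := by push_cast; ring

lemma ballx_norm {x : ℝ} (hx0 : 0 < x) (hx : x < 1 / 2) {q : ℂ} (hq : q ∈ Metric.ball (x : ℂ) ((1 - 2 * x) / 6)) :
    ‖q‖ < 1 / 2 := by
  rw [mem_ball_iff_norm] at hq
  have h1 : ‖q‖ ≤ ‖q - x‖ + ‖(x : ℂ)‖ := by simpa using norm_add_le (q - x) (x : ℂ)
  rw [Complex.norm_real, Real.norm_of_nonneg hx0.le] at h1
  linarith

lemma den_lower {x : ℝ} (hx0 : 0 < x) (hx : x < 1 / 2) {q : ℂ} (hq : q ∈ Metric.ball (x : ℂ) ((1 - 2 * x) / 6))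
    (n : ℕ) : (1 - 2 * x) / 2 ≤ ‖1 - 2 * q + q ^ (n + 2)‖ := by
  have hn := ballx_norm hx0 hx hq
  have hxn : ‖(x : ℂ)‖ ≤ 1 / 2 := by
    rw [Complex.norm_real, Real.norm_of_nonneg hx0.le]; exact hx.le
  have hp := pow_sub_bound hn.le hxn n
  rw [mem_ball_iff_norm] at hq
  have e : ((1 - 2 * x + x ^ (n + 2) : ℝ) : ℂ) =
      (1 - 2 * q + q ^ (n + 2)) + (2 * (q - x) - (q ^ (n + 2) - x ^ (n + 2))) := by
    push_cast; ring
  have h1 : ‖((1 - 2 * x + x ^ (n + 2) : ℝ) : ℂ)‖ ≤ ‖1 - 2 * q + q ^ (n + 2)‖ + (2 * ‖q - x‖ + ‖q - x‖) := by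
    rw [e]
    refine (norm_add_le _ _).trans ?_
    gcongr
    refine (norm_sub_le _ _).trans ?_
    rw [norm_mul]
    simp only [Complex.norm_ofNat]
    gcongr
  have hpos : 0 < x ^ (n + 2) := by positivity
  rw [Complex.norm_real, Real.norm_of_nonneg (by linarith)] at h1
  linarith

lemma diff_qPF {g : ℂ → ℂ} {s : Set ℂ} (hg : DifferentiableOn ℂ g s) (n : ℕ) :
    DifferentiableOn ℂ (fun q => qPF (g q) q n) s := by
  unfold qPF
  refine DifferentiableOn.fun_finsetProd fun i _ => ?_
  fun_prop

lemma diff_qPI {g : ℂ → ℂ} {s : Set ℂ} (hs : IsOpen s) (hs2 : ∀ q ∈ s, ‖q‖ < 1 / 2)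
    (hg : DifferentiableOn ℂ g s) (hgb : ∀ q ∈ s, ‖g q‖ ≤ 2) :
    DifferentiableOn ℂ (fun q => qPI (g q) q) s := by
  have hu : Summable fun n : ℕ => 2 * (1 / 2 : ℝ) ^ n :=
    (summable_geometric_of_lt_one (by norm_num) (by norm_num)).mul_left _
  have hd : ∀ n : ℕ, DifferentiableOn ℂ (fun q => -(g q * q ^ n)) s := fun n => by fun_prop
  have := Summable.hasProdLocallyUniformlyOn_nat_one_add (f := fun n q => -(g q * q ^ n)) hs hu
    (Eventually.of_forall fun n q hq => ?_) (fun n => (hd n).continuousOn)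
  · have h2 := (hasProdLocallyUniformlyOn_iff_tendstoLocallyUniformlyOn.mp this).differentiableOn
      (Eventually.of_forall fun t => DifferentiableOn.fun_finsetProd fun i _ => (hd i).const_add 1) hs
    simpa [qPI, sub_eq_add_neg] using h2
  · rw [norm_neg, norm_mul, norm_pow]
    have h1 := hgb q hq
    have h2 := (hs2 q hq).le
    gcongr

lemma fPA_analytic : AnalyticOnNhd ℂ fPA {z : ℂ | z.im = 0 ∧ 0 < z.re ∧ z.re < 1 / 2} := by
  rintro z ⟨hz0, hz1, hz2⟩
  obtain ⟨x, rfl⟩ : ∃ x : ℝ, z = x := ⟨z.re, by apply Complex.ext <;> simp [hz0]⟩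
  simp only [Complex.ofReal_re] at hz1 hz2
  set s := Metric.ball (x : ℂ) ((1 - 2 * x) / 6) with hs
  have hso : IsOpen s := Metric.isOpen_ball
  have hsx : (x : ℂ) ∈ s := Metric.mem_ball_self (by linarith)
  have hs2 : ∀ q ∈ s, ‖q‖ < 1 / 2 := fun q hq => ballx_norm hz1 hz2 hq
  suffices h : DifferentiableOn ℂ fPA s from h.analyticAt (hso.mem_nhds hsx)
  have ht : ∀ q ∈ s, 1 - 2 * q ≠ 0 := by
    intro q hq h
    have : ‖q‖ = 1 / 2 := by
      rw [show q = 1 / 2 by linear_combination -h / 2]; norm_num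
    linarith [hs2 q hq]
  have hv : DifferentiableOn ℂ vF s := by
    unfold vF
    exact DifferentiableOn.div (by fun_prop) (by fun_prop) fun q hq => hf_one_sub_ne (hs2 q hq)
  have ha : DifferentiableOn ℂ aF s := by
    unfold aF
    exact DifferentiableOn.div (by fun_prop) (by fun_prop) fun q hq => hf_den_ne (hs2 q hq)
  have hA : DifferentiableOn ℂ AF s := by
    unfold AF
    exact DifferentiableOn.div (by fun_prop) (by fun_prop) fun q hq => pow_ne_zero _ (ht q hq)
  have hC : DifferentiableOn ℂ CF s := by
    unfold CF
    exact DifferentiableOn.div (by fun_prop) (by fun_prop) fun q hq =>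
      mul_ne_zero (hf_one_sub_ne (hs2 q hq)) (pow_ne_zero _ (ht q hq))
  have hP1 : DifferentiableOn ℂ (fun q => qPI (vF q) q) s :=
    diff_qPI hso hs2 hv fun q hq => (hf_v (hs2 q hq)).trans (by norm_num)
  have hP2 : DifferentiableOn ℂ (fun q => qPI (aF q * vF q) q) s :=
    diff_qPI hso hs2 (ha.mul hv) fun q hq => (hf_av (hs2 q hq)).trans (by norm_num)
  have hP : DifferentiableOn ℂ (fun q => qPI (vF q) q / qPI (aF q * vF q) q) s :=
    hP1.div hP2 fun q hq => qPI_ne_zero (hf_lt (hs2 q hq))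
      ((hf_av (hs2 q hq)).trans_lt (by norm_num))
  obtain ⟨M, hM, hb⟩ := Sterm_bound
  have hδ : 0 < (1 - 2 * x) / 2 := by linarith
  have hS : DifferentiableOn ℂ (fun q => ∑' n, Sterm q n) s := by
    refine Complex.differentiableOn_tsum_of_summable_norm
      (u := fun n => M / ((1 - 2 * x) / 2) * (3 / 4) ^ n)
      ((summable_geometric_of_lt_one (by norm_num) (by norm_num)).mul_left _) (fun n => ?_) hso
      fun n q hq => hb q (hs2 q hq) _ hδ n (den_lower hz1 hz2 hq n)
    unfold Sterm
    refine DifferentiableOn.div (DifferentiableOn.mul (DifferentiableOn.div (diff_qPF ha n)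
      (diff_qPF differentiableOn_id n) ?_) ?_) ?_ ?_
    · intro q hq
      exact qPF_ne_zero (hf_lt (hs2 q hq)) (hf_lt (hs2 q hq)) n
    · exact (hv.mul differentiableOn_id).pow n
    · fun_prop
    · intro q hq h
      have := den_lower hz1 hz2 hq n
      rw [h, norm_zero] at this
      linarith
  unfold fPA
  exact hC.sub (((DifferentiableOn.mul (by fun_prop) hA).mul hP).mul hS)

lemma PA_prod {q : ℂ} (hq : ‖q‖ < 1 / 2) (m : ℕ) :
    ∏ k ∈ Finset.Icc 1 m,
      ((1 - q - q ^ k + q ^ (k + 1) - q ^ (k + 2)) / (1 - q - q ^ (k + 1))) =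
    qPF (vF q * q) q m / qPF (aF q * vF q) q m := by
  have h1 := hf_one_sub_ne hq
  induction m with
  | zero => simp [qPF_zero]
  | succ m ih =>
    rw [Finset.prod_Icc_succ_top (by omega), ih, qPF_succ, qPF_succ, mul_div_mul_comm]
    congr 1
    have e1 : 1 - q - q ^ (m + 1) + q ^ (m + 1 + 1) - q ^ (m + 1 + 2) =
        (1 - q) * (1 - vF q * q * q ^ m) := by
      rw [vF]; field_simp; ring
    have e2 : 1 - q - q ^ (m + 1 + 1) = (1 - q) * (1 - aF q * vF q * q ^ m) := by
      rw [hf_av_eq hq]; field_simp; ring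
    rw [e1, e2, mul_div_mul_left _ _ h1]

lemma PAterm_eq {q : ℂ} (hq : ‖q‖ < 1 / 2) (m : ℕ) :
    PAterm q (m + 1) = qPI (vF q * q) q / (qPI (aF q * vF q) q * (1 - q)) *
      ∑' ν, qPF (aF q) q ν / qPF q q ν * (vF q * q ^ (m + 1)) ^ ν * (-q ^ 2 / (1 - 2 * q)) ^ (m + 1) := by
  have hq1 := hf_lt hq
  have h1 := hf_one_sub_ne hq
  have hav : ‖aF q * vF q‖ < 1 := (hf_av hq).trans_lt (by norm_num)
  have hvq : ‖vF q * q‖ < 1 := (hf_vq hq).trans_lt (by norm_num)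
  have hx : ‖vF q * q ^ (m + 1)‖ < 1 := by
    rw [pow_succ', ← mul_assoc]; exact norm_mul_pow_lt_one hq1 hvq m
  have e2 : 1 - q - q ^ (m + 1 + 1) = (1 - q) * (1 - aF q * vF q * q ^ m) := by
    rw [hf_av_eq hq]; field_simp; ring
  rw [tsum_mul_right, qbinomial hq1 hx, PAterm, Nat.add_sub_cancel, PA_prod hq, e2]
  have f1 := qPI_eq_n hq1 (vF q * q) m
  have f2 := qPI_eq_n hq1 (aF q * vF q) (m + 1)
  rw [mul_assoc (vF q), ← pow_succ'] at f1
  rw [mul_assoc (aF q) (vF q) (q ^ (m + 1))] at f2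
  have n1 : qPI (vF q * q ^ (m + 1)) q ≠ 0 := qPI_ne_zero hq1 hx
  have n2 : qPI (aF q * vF q) q ≠ 0 := qPI_ne_zero hq1 hav
  have n3 : qPF (aF q * vF q) q (m + 1) ≠ 0 := qPF_ne_zero hq1 hav _
  have n4 : qPF (aF q * vF q) q m ≠ 0 := qPF_ne_zero hq1 hav _
  have n5 : 1 - aF q * vF q * q ^ m ≠ 0 :=
    one_sub_ne_zero_of_norm (norm_mul_pow_lt_one hq1 hav m)
  have e3 : qPI (vF q * q) q / (qPI (aF q * vF q) q * (1 - q)) *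
      (qPI (aF q * (vF q * q ^ (m + 1))) q / qPI (vF q * q ^ (m + 1)) q) =
      qPF (vF q * q) q m / (qPF (aF q * vF q) q m * (1 - aF q * vF q * q ^ m) * (1 - q)) := by
    rw [← qPF_succ]
    rw [div_mul_div_comm, div_eq_div_iff (mul_ne_zero (mul_ne_zero n2 h1) n1) (mul_ne_zero n3 h1)]
    rw [f1, f2]
    ring_nf
  rw [← mul_assoc (qPI (vF q * q) q / (qPI (aF q * vF q) q * (1 - q))), e3, div_pow, neg_pow (q ^ 2), ← pow_mul, div_mul_div_comm, div_mul_div_comm]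
  ring_nf

lemma PAseries_eq {q : ℂ} (hq : ‖q‖ < 1 / 10) : fPA q = PAseries q := by
  have hq2 : ‖q‖ < 1 / 2 := by linarith
  have hq1 := hf_lt hq2
  have h1 := hf_one_sub_ne hq2
  have ht : 4 / 5 ≤ ‖1 - 2 * q‖ := by
    have := norm_sub_norm_le (1 : ℂ) (2 * q)
    rw [norm_one, norm_mul, Complex.norm_ofNat] at this
    linarith
  have ht0 : 1 - 2 * q ≠ 0 := by
    intro h; rw [h, norm_zero] at ht; linarith
  have ht0' : 1 - q * 2 ≠ 0 := by rwa [mul_comm q 2]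
  have hw : ‖-q ^ 2 / (1 - 2 * q)‖ ≤ 1 / 2 := by
    rw [norm_div, norm_neg, norm_pow, div_le_iff₀ (by linarith)]
    nlinarith [norm_nonneg q]
  obtain ⟨M, hM, hb⟩ := hf_ratio
  set w := -q ^ 2 / (1 - 2 * q) with hwdef
  set E : ℕ → ℕ → ℂ := fun m ν => qPF (aF q) q ν / qPF q q ν * (vF q * q ^ (m + 1)) ^ ν * w ^ (m + 1)
    with hE
  have hsum : Summable (Function.uncurry E) := by
    refine Summable.of_norm_bounded (g := fun p : ℕ × ℕ => (1 / 2 : ℝ) ^ p.1 * (M * (3 / 4) ^ p.2)) ?_ ?_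
    · exact Summable.mul_of_nonneg (summable_geometric_of_lt_one (by norm_num) (by norm_num))
        ((summable_geometric_of_lt_one (by norm_num) (by norm_num)).mul_left M)
        (fun _ => by positivity) (fun _ => by positivity)
    · rintro ⟨m, ν⟩
      simp only [Function.uncurry, hE, norm_mul, norm_pow]
      have i1 := hb q hq2 ν
      have i2 : ‖vF q‖ * ‖q‖ ^ (m + 1) ≤ 3 / 4 := by
        have := hf_vq hq2
        rw [norm_mul] at this
        calc ‖vF q‖ * ‖q‖ ^ (m + 1) = (‖vF q‖ * ‖q‖) * ‖q‖ ^ m := by ring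
          _ ≤ 3 / 4 * 1 := by gcongr; exact pow_le_one₀ (norm_nonneg _) hq1.le
          _ = _ := by ring
      have i3 : ‖w‖ ^ (m + 1) ≤ (1 / 2) ^ m := by
        calc ‖w‖ ^ (m + 1) ≤ (1 / 2) ^ (m + 1) := by gcongr
          _ ≤ _ := pow_le_pow_of_le_one (by norm_num) (by norm_num) (by omega)
      calc _ ≤ M * (3 / 4) ^ ν * (1 / 2) ^ m := by gcongr
        _ = _ := by ring
  have hinner : ∀ ν, ∑' m, E m ν = -q ^ 2 * Sterm q ν := by
    intro ν
    have hwq : ‖w * q ^ ν‖ < 1 := norm_mul_pow_lt_one hq1 (hw.trans_lt (by norm_num)) ν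
    have e : ∀ m, E m ν = (qPF (aF q) q ν / qPF q q ν * vF q ^ ν * (w * q ^ ν)) * (w * q ^ ν) ^ m := by
      intro m
      simp only [hE, mul_pow, ← pow_mul]
      ring_nf
    simp_rw [e]
    rw [tsum_mul_left, tsum_geometric_of_norm_lt_one hwq, Sterm]
    have hne := one_sub_ne_zero_of_norm hwq
    have e4 : 1 - w * q ^ ν = (1 - 2 * q + q ^ (ν + 2)) / (1 - 2 * q) := by
      rw [hwdef]; field_simp; ring
    have hne2 : 1 - 2 * q + q ^ (ν + 2) ≠ 0 := by
      intro h; rw [h, zero_div] at e4; exact hne e4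
    rw [e4, hwdef, mul_pow]
    generalize qPF (aF q) q ν / qPF q q ν = R
    field_simp
  have htot : ∑' m, PAterm q (m + 1) = qPI (vF q) q / qPI (aF q * vF q) q * ∑' ν, Sterm q ν := by
    simp_rw [PAterm_eq hq2]
    rw [tsum_mul_left]
    have := hsum.tsum_comm
    simp only [hE] at this
    rw [← hwdef, ← this]
    have h5 : ∑' ν, ∑' m, E m ν = -q ^ 2 * ∑' ν, Sterm q ν := by
      simp_rw [hinner]; rw [tsum_mul_left]
    simp only [hE] at h5
    rw [h5, qPI_eq hq1 (vF q)]
    have : 1 - vF q = -q ^ 2 / (1 - q) := by rw [hf_v_eq hq2]; ring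
    rw [this]
    have n2 : qPI (aF q * vF q) q ≠ 0 := qPI_ne_zero hq1 ((hf_av hq2).trans_lt (by norm_num))
    generalize ∑' ν, Sterm q ν = S
    field_simp
  rw [fPA, PAseries, htot, CF, AF, mul_comm (1 - q) ((1 - 2 * q) ^ 2)]
  ring

lemma qPF_reflect {x q : ℂ} (hx : x ≠ 0) (hq : q ≠ 0) (j : ℕ) :
    qPF (x * q ^ (-(j : ℤ))) q j =
      x ^ j * (∏ i ∈ Finset.range j, -(q ^ (i + 1))⁻¹) * qPF (q / x) q j := by
  have hxj : x ^ j = ∏ i ∈ Finset.range j, x := by simp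
  rw [qPF, ← Finset.prod_range_reflect, qPF, mul_assoc, ← Finset.prod_mul_distrib,
    hxj, ← Finset.prod_mul_distrib]
  refine Finset.prod_congr rfl fun i hi => ?_
  have hi' : i < j := Finset.mem_range.mp hi
  have e : q ^ (-(j : ℤ)) * q ^ (j - 1 - i) = (q ^ (i + 1))⁻¹ := by
    rw [← zpow_natCast, ← zpow_natCast, ← zpow_add₀ hq, ← zpow_neg]
    congr 1
    omega
  rw [mul_assoc x, e]
  field_simp
  ring

lemma Tterm_eq {q : ℂ} (hq : q ≠ 0) (ha : aF q ≠ 0) (ν j : ℕ) :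
    Tterm q ν j = (vF q * q) ^ ν / (1 - 2 * q + q ^ (ν + 2)) *
      (qPF (q / aF q) q j / qPF q q j * (aF q * q ^ ν) ^ j) := by
  have h1 := qPF_reflect one_ne_zero hq j
  rw [one_mul, one_pow, one_mul, div_one] at h1
  have hP : ∏ i ∈ Finset.range j, -(q ^ (i + 1))⁻¹ ≠ 0 :=
    Finset.prod_ne_zero_iff.mpr fun i _ => neg_ne_zero.mpr (inv_ne_zero (pow_ne_zero _ hq))
  have e : qPF (aF q * q ^ (-(j : ℤ))) q j / qPF (q ^ (-(j : ℤ))) q j =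
      aF q ^ j * (qPF (q / aF q) q j / qPF q q j) := by
    rw [h1, qPF_reflect ha hq j, mul_comm (aF q ^ j), mul_assoc, mul_div_mul_left _ _ hP, mul_div_assoc]
  rw [Tterm, e]
  generalize qPF (q / aF q) q j / qPF q q j = R
  rw [mul_pow, mul_pow, ← pow_mul, add_mul, pow_add, one_mul, mul_comm j ν]
  ring

lemma aF_real (q : ℝ) : aF (q : ℂ) = (aR q : ℂ) := by simp [aF, aR]
lemma vF_real (q : ℝ) : vF (q : ℂ) = (vR q : ℂ) := by simp [vF, vR]

section realq
variable {q : ℝ} (h0 : 2 / 5 < q) (h1 : q < 1 / 2)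
include h0 h1

lemma rq_norm : ‖(q : ℂ)‖ < 1 / 2 := by
  rw [Complex.norm_real, Real.norm_of_nonneg (by linarith)]; exact h1

lemma rq_ne : (q : ℂ) ≠ 0 := by
  exact_mod_cast (by linarith : q ≠ 0)

lemma aR_pos : 0 < aR q := by
  have : 0 < 1 - q + q ^ 2 := by nlinarith
  have : 0 < q := by linarith
  rw [aR]; positivity

lemma aR_lt : aR q < 1 / 2 := by
  have : 0 < 1 - q + q ^ 2 := by nlinarith
  rw [aR, div_lt_iff₀ this]
  nlinarith

lemma vR_gt : 1 < vR q := by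
  rw [vR, lt_div_iff₀ (by linarith)]
  nlinarith

lemma vR_lt : vR q < 3 / 2 := by
  rw [vR, div_lt_iff₀ (by linarith)]
  nlinarith

lemma aF_ne : aF (q : ℂ) ≠ 0 := by
  rw [aF_real]; exact_mod_cast (aR_pos h0 h1).ne'

lemma vF_ne : vF (q : ℂ) ≠ 0 := by
  rw [vF_real]; exact_mod_cast (by linarith [vR_gt h0 h1] : vR q ≠ 0)

lemma aF_lt : ‖aF (q : ℂ)‖ < 1 / 2 := by
  rw [aF_real, Complex.norm_real, Real.norm_of_nonneg (aR_pos h0 h1).le]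
  exact aR_lt h0 h1

lemma den_real (n : ℕ) : 1 - 2 * q ≤ ‖1 - 2 * (q : ℂ) + (q : ℂ) ^ n‖ := by
  have : 1 - 2 * (q : ℂ) + (q : ℂ) ^ n = ((1 - 2 * q + q ^ n : ℝ) : ℂ) := by push_cast; ring
  have h2 : 0 < q ^ n := by have : 0 < q := by linarith
                            positivity
  rw [this, Complex.norm_real, Real.norm_of_nonneg (by linarith)]
  linarith

lemma Tsummable : Summable (fun p : ℕ × ℕ => ‖Tterm (q : ℂ) (p.1 + 1) p.2‖) := by
  have hn := rq_norm h0 h1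
  obtain ⟨M, hM, hb⟩ := qratio_bound' (b := (q : ℂ) / aF q) (c := (q : ℂ)) (hf_lt hn) (hf_lt hn)
  have ht : 0 < 1 - 2 * q := by linarith
  refine Summable.of_nonneg_of_le (f := fun p : ℕ × ℕ => ((3 / 4 : ℝ) ^ p.1 * (1 - 2 * q)⁻¹) *
    (M * (1 / 2) ^ p.2)) (fun _ => norm_nonneg _) ?_ ?_
  · rintro ⟨ν, j⟩
    simp only
    rw [Tterm_eq (rq_ne h0 h1) (aF_ne h0 h1), norm_mul, norm_mul, norm_div, norm_pow,
      norm_pow]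
    have i1 := hb j
    have i2 : ‖vF (q : ℂ) * q‖ ^ (ν + 1) ≤ (3 / 4) ^ ν := by
      calc ‖vF (q : ℂ) * q‖ ^ (ν + 1) ≤ (3 / 4) ^ (ν + 1) := by gcongr; exact hf_vq hn
        _ ≤ _ := pow_le_pow_of_le_one (by norm_num) (by norm_num) (by omega)
    have i3 : ‖aF (q : ℂ) * q ^ (ν + 1)‖ ≤ 1 / 2 := by
      rw [norm_mul, norm_pow]
      calc ‖aF (q : ℂ)‖ * ‖(q : ℂ)‖ ^ (ν + 1) ≤ 1 / 2 * 1 := by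
            gcongr
            · exact (aF_lt h0 h1).le
            · exact pow_le_one₀ (norm_nonneg _) (hf_lt hn).le
        _ = _ := by ring
    have i4 := den_real h0 h1 (ν + 1 + 2)
    rw [div_eq_mul_inv]
    gcongr
  · exact Summable.mul_of_nonneg
      ((summable_geometric_of_lt_one (by norm_num) (by norm_num)).mul_right _)
      ((summable_geometric_of_lt_one (by norm_num) (by norm_num)).mul_left M)
      (fun _ => by positivity) (fun _ => by positivity)

lemma Ssummable : Summable (fun n => ‖Sterm (q : ℂ) n‖) := by
  obtain ⟨M, hM, hb⟩ := Sterm_bound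
  refine Summable.of_nonneg_of_le (fun _ => norm_nonneg _)
    (fun n => hb _ (rq_norm h0 h1) (1 - 2 * q) (by linarith) n (den_real h0 h1 _))
    ((summable_geometric_of_lt_one (by norm_num) (by norm_num)).mul_left _)

lemma T_eq : ∑' p : ℕ × ℕ, Tterm (q : ℂ) (p.1 + 1) p.2 =
    qPI (q : ℂ) q / qPI (aF q) q * (∑' ν, Sterm (q : ℂ) ν - 1 / (1 - 2 * (q : ℂ) + q ^ 2)) := by
  have hn := rq_norm h0 h1
  have hn1 := hf_lt hn
  have ha1 : ‖aF (q : ℂ)‖ < 1 := (aF_lt h0 h1).trans (by norm_num)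
  have S0 : Sterm (q : ℂ) 0 = 1 / (1 - 2 * (q : ℂ) + q ^ 2) := by
    simp [Sterm, qPF_zero]
  rw [(Tsummable h0 h1).of_norm.tsum_prod, (Ssummable h0 h1).of_norm.tsum_eq_zero_add, S0,
    add_sub_cancel_left, ← tsum_mul_left]
  refine tsum_congr fun ν => ?_
  simp_rw [Tterm_eq (rq_ne h0 h1) (aF_ne h0 h1)]
  rw [tsum_mul_left, qbinomial hn1 (norm_mul_pow_lt_one hn1 ha1 _), Sterm]
  have e : (q : ℂ) / aF q * (aF q * (q : ℂ) ^ (ν + 1)) = q * (q : ℂ) ^ (ν + 1) := by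
    have := aF_ne h0 h1
    field_simp
  rw [e, qPI_eq_n hn1 (q : ℂ) (ν + 1), qPI_eq_n hn1 (aF q) (ν + 1)]
  have n1 : qPF (aF q) (q : ℂ) (ν + 1) ≠ 0 := qPF_ne_zero hn1 ha1 _
  have n2 : qPF (q : ℂ) (q : ℂ) (ν + 1) ≠ 0 := qPF_ne_zero hn1 hn1 _
  have n3 : qPI (aF q * (q : ℂ) ^ (ν + 1)) q ≠ 0 :=
    qPI_ne_zero hn1 (norm_mul_pow_lt_one hn1 ha1 _)
  generalize 1 - 2 * (q : ℂ) + (q : ℂ) ^ (ν + 1 + 2) = d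
  field_simp

lemma fPA_eq : fPA (q : ℂ) =
    DF (q : ℂ) - (q : ℂ) ^ 2 * AF (q : ℂ) *
      (qPI (aF q) q * qPI (vF q) q /
        (qPI (q : ℂ) q * qPI (aF q * vF q) q)) *
      (∑' p : ℕ × ℕ, Tterm (q : ℂ) (p.1 + 1) p.2) := by
  have hn := rq_norm h0 h1
  have hn1 := hf_lt hn
  have ha1 : ‖aF (q : ℂ)‖ < 1 := (aF_lt h0 h1).trans (by norm_num)
  have n1 : qPI (aF q) (q : ℂ) ≠ 0 := qPI_ne_zero hn1 ha1
  have n2 : qPI (q : ℂ) (q : ℂ) ≠ 0 := qPI_ne_zero hn1 hn1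
  have n3 : qPI (aF q * vF q) (q : ℂ) ≠ 0 :=
    qPI_ne_zero hn1 ((hf_av hn).trans_lt (by norm_num))
  have n4 := hf_one_sub_ne hn
  rw [T_eq h0 h1, fPA, DF, show 1 - 2 * (q : ℂ) + q ^ 2 = (1 - q) ^ 2 by ring]
  generalize ∑' ν, Sterm (q : ℂ) ν = S
  generalize AF (q : ℂ) = A
  field_simp
  ring

end realq

/-- the coefficients of the partial fraction expansion -/
def cco (a v q : ℂ) (n : ℕ) : ℂ := qPF a q n / qPF q q n * (v * q) ^ n

/-- the partial fraction series -/
def FF (a v q z : ℂ) : ℂ := ∑' n, cco a v q n / (z + q ^ n)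

/-- the regular particular solution -/
def GG (a v q z : ℂ) : ℂ := ∑' r, qPF (a⁻¹ * v⁻¹ * q) q r / qPF (v⁻¹ * q) q r * (-(a * z)) ^ r

lemma cco_rec {a v q : ℂ} (hq : ‖q‖ < 1) (n : ℕ) :
    cco a v q (n + 1) * (1 - q ^ (n + 1)) = v * q * (cco a v q n * (1 - a * q ^ n)) := by
  have h1 := qPF_ne_zero hq hq n
  have h2 := qPF_ne_zero hq hq (n + 1)
  have e : qPF a q (n + 1) / qPF q q (n + 1) * (1 - q ^ (n + 1)) =
      qPF a q n / qPF q q n * (1 - a * q ^ n) := by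
    rw [qPF_succ] at h2
    rw [qPF_succ, qPF_succ, div_mul_eq_mul_div, div_mul_eq_mul_div, div_eq_div_iff h2 h1]
    ring
  rw [cco, cco, pow_succ (v * q)]
  linear_combination (v * q) ^ n * (v * q) * e

section feq
variable {a v : ℂ} {q z : ℝ} (hq0 : 0 < q) (hq1 : q < 1) (hvq : ‖v * q‖ < 1)
include hq0 hq1

lemma qn_lt : ‖(q : ℂ)‖ < 1 := by
  rw [Complex.norm_real, Real.norm_of_nonneg hq0.le]; exact hq1

omit hq1 in
lemma den_norm (hz : 0 < z) (n : ℕ) : ‖(z : ℂ) + (q : ℂ) ^ n‖ = z + q ^ n := by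
  rw [← Complex.ofReal_pow, ← Complex.ofReal_add, Complex.norm_real, Real.norm_of_nonneg]
  positivity

omit hq1 in
lemma den_ne (hz : 0 < z) (n : ℕ) : (z : ℂ) + (q : ℂ) ^ n ≠ 0 := by
  rw [← norm_pos_iff, den_norm hq0 hz]
  positivity

include hvq

lemma cco_summable : Summable (fun n => ‖cco a v q n‖) :=
  summable_qbin (qn_lt hq0 hq1) (qn_lt hq0 hq1) hvq

lemma FF_summable (hz : 0 < z) : Summable (fun n => cco a v q n / ((z : ℂ) + (q : ℂ) ^ n)) := by
  refine Summable.of_norm_bounded ((cco_summable (a := a) hq0 hq1 hvq).mul_right z⁻¹) fun n => ?_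
  rw [norm_div, den_norm hq0 hz, div_eq_mul_inv]
  gcongr
  have : 0 < q ^ n := by positivity
  linarith

lemma FF_feq (hz : 0 < z) (hv : 1 - v ≠ 0) :
    (1 + (q : ℂ) * z) * FF a v q (q * z) - v * (1 + a * z) * FF a v q z =
      qPI (a * v) q / qPI v q * (1 - v) := by
  have hn := qn_lt hq0 hq1
  have hq0' : (q : ℂ) ≠ 0 := by exact_mod_cast hq0.ne'
  have hz' : 0 < q * z := by positivity
  have sc := (cco_summable (a := a) hq0 hq1 hvq).of_norm
  have sF := FF_summable (a := a) hq0 hq1 hvq hz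
  have sF' := FF_summable (a := a) hq0 hq1 hvq hz'
  set S := ∑' n, cco a v q n with hS
  have c0 : cco a v (q : ℂ) 0 = 1 := by simp [cco, qPF_zero]
  -- left hand side
  have s1 : Summable fun n => cco a v q (n + 1) / ((z : ℂ) + (q : ℂ) ^ n) := by
    have := ((summable_nat_add_iff 1).mpr sF').mul_left (q : ℂ)
    refine this.congr fun n => ?_
    have h1 := den_ne hq0 hz n
    have h2 := den_ne hq0 hz' (n + 1)
    push_cast at h2 ⊢
    rw [show (q : ℂ) * z + (q : ℂ) ^ (n + 1) = q * (z + (q : ℂ) ^ n) by ring]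
    field_simp
  have L1 : ∑' n, cco a v q (n + 1) / ((z : ℂ) + (q : ℂ) ^ n) =
      q * (FF a v q (q * z) - 1 / (q * z + 1)) := by
    have := sF'.tsum_eq_zero_add
    rw [c0, pow_zero] at this
    push_cast at this
    rw [FF, this, add_sub_cancel_left, ← tsum_mul_left]
    refine tsum_congr fun n => ?_
    have h1 := den_ne hq0 hz n
    rw [show (q : ℂ) * z + (q : ℂ) ^ (n + 1) = q * (z + (q : ℂ) ^ n) by ring]
    field_simp
  have L2 : ∑' n, cco a v q (n + 1) = S - 1 := by
    rw [hS, sc.tsum_eq_zero_add, c0]; ring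
  have s2 : Summable fun n => cco a v q (n + 1) := (summable_nat_add_iff 1).mpr sc
  have key : (1 + (q : ℂ) * z) * (q * (FF a v q (q * z) - 1 / (q * z + 1))) - q * (S - 1) =
      v * q * ((1 + a * z) * FF a v q z - a * S) := by
    rw [← L1, ← L2, FF, hS, ← tsum_mul_left, ← tsum_mul_left, ← tsum_mul_left, ← tsum_mul_left,
      ← (s1.mul_left _).tsum_sub (s2.mul_left _), ← (sF.mul_left _).tsum_sub (sc.mul_left _),
      ← tsum_mul_left]
    refine tsum_congr fun n => ?_
    have h1 := den_ne hq0 hz n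
    have h2 := cco_rec (a := a) (v := v) hn n
    have e1 : (1 + (q : ℂ) * z) * (cco a v q (n + 1) / ((z : ℂ) + (q : ℂ) ^ n)) - q * cco a v q (n + 1)
        = cco a v q (n + 1) * (1 - (q : ℂ) ^ (n + 1)) / ((z : ℂ) + (q : ℂ) ^ n) := by
      field_simp
      ring
    rw [e1, h2]
    field_simp
    ring
  have hone : (q : ℂ) * z + 1 ≠ 0 := by
    have := den_ne hq0 hz' 0
    push_cast at this
    simpa using this
  have e3 : (1 + (q : ℂ) * z) * (1 / (q * z + 1)) = 1 := by
    rw [add_comm]; field_simp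
  have hSv : S = qPI (a * (v * q)) q / qPI (v * q) q := qbinomial hn hvq
  have n1 : qPI (v * q) (q : ℂ) ≠ 0 := qPI_ne_zero hn hvq
  have hfin : qPI (a * v) q / qPI v q * (1 - v) = (1 - a * v) * S := by
    rw [qPI_eq hn (a * v), qPI_eq hn v, hSv, mul_assoc a]
    field_simp
  rw [hfin]
  have key2 : q * ((1 + (q : ℂ) * z) * FF a v q (q * z) - v * (1 + a * z) * FF a v q z) =
      q * ((1 - a * v) * S) := by
    linear_combination key + q * e3
  exact mul_left_cancel₀ hq0' key2

omit hvq in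
lemma GG_feq (ha : a ≠ 0) (hv : 1 < ‖v‖) (hz : ‖a * z‖ < 1) :
    (1 + (q : ℂ) * z) * GG a v q (q * z) - v * (1 + a * z) * GG a v q z = 1 - v := by
  have hn := qn_lt hq0 hq1
  have hv0 : v ≠ 0 := by rintro rfl; simp at hv; linarith
  have hvi : ‖v⁻¹ * (q : ℂ)‖ < 1 := by
    rw [norm_mul, norm_inv]
    have : ‖v‖⁻¹ < 1 := inv_lt_one_of_one_lt₀ hv
    nlinarith [norm_nonneg (q : ℂ), inv_nonneg.mpr (norm_nonneg v)]
  set b : ℕ → ℂ := fun r => qPF (a⁻¹ * v⁻¹ * q) q r / qPF (v⁻¹ * q) q r with hb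
  have hz' : ‖-(a * (z : ℂ))‖ < 1 := by rwa [norm_neg]
  have hzq : ‖-(a * ((q : ℂ) * z))‖ < 1 := by
    have := norm_mul_pow_lt_one hn hz 1
    rw [norm_neg]
    rwa [pow_one, mul_assoc, mul_comm (z : ℂ)] at this
  have s1 : Summable fun r => b r * (-(a * (z : ℂ))) ^ r := (summable_qbin hn hvi hz').of_norm
  have s2 : Summable fun r => b r * (-(a * ((q : ℂ) * z))) ^ r := (summable_qbin hn hvi hzq).of_norm
  have hrec : ∀ r, b (r + 1) * (v - (q : ℂ) ^ (r + 1)) * a = b r * (a * v - (q : ℂ) ^ (r + 1)) := by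
    intro r
    have h1 := qPF_ne_zero hn hvi r
    have h2 := qPF_ne_zero hn hvi (r + 1)
    have e : b (r + 1) * (1 - v⁻¹ * q * (q : ℂ) ^ r) = b r * (1 - a⁻¹ * v⁻¹ * q * (q : ℂ) ^ r) := by
      simp only [hb]
      rw [qPF_succ _ _ r] at h2
      rw [qPF_succ, qPF_succ, div_mul_eq_mul_div, div_mul_eq_mul_div, div_eq_div_iff h2 h1]
      ring
    have e1 : v - (q : ℂ) ^ (r + 1) = v * (1 - v⁻¹ * q * (q : ℂ) ^ r) := by
      field_simp; ring
    have e2 : a * v - (q : ℂ) ^ (r + 1) = a * v * (1 - a⁻¹ * v⁻¹ * q * (q : ℂ) ^ r) := by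
      field_simp; ring
    rw [e1, e2]
    linear_combination a * v * e
  have hb0 : b 0 = 1 := by simp [hb, qPF_zero]
  have key : ∑' r, b r * (-(a * ((q : ℂ) * z))) ^ r - v * ∑' r, b r * (-(a * (z : ℂ))) ^ r =
      1 - v + (v * a * z * ∑' r, b r * (-(a * (z : ℂ))) ^ r
        - q * z * ∑' r, b r * (-(a * ((q : ℂ) * z))) ^ r) := by
    rw [← tsum_mul_left, ← tsum_mul_left, ← tsum_mul_left, ← s2.tsum_sub (s1.mul_left v),
      ← (s1.mul_left _).tsum_sub (s2.mul_left _), (s2.sub (s1.mul_left v)).tsum_eq_zero_add]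
    simp only [pow_zero, hb0, mul_one]
    congr 1
    refine tsum_congr fun r => ?_
    have := hrec r
    have e : ∀ n : ℕ, (-(a * ((q : ℂ) * z))) ^ n = (q : ℂ) ^ n * (-(a * (z : ℂ))) ^ n := by
      intro n; rw [← mul_pow]; ring
    rw [e, e, pow_succ (-(a * (z : ℂ)))]
    linear_combination (-(a * (z : ℂ))) ^ r * z * this
  have g1 : GG a v q (q * z) = ∑' r, b r * (-(a * ((q : ℂ) * z))) ^ r := rfl
  have g2 : GG a v q z = ∑' r, b r * (-(a * (z : ℂ))) ^ r := rfl
  rw [g1, g2]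
  linear_combination key

end feq

/-- ratio of finite q-Pochhammer symbols, extended by zero to the integers -/
def rrat (a q : ℂ) (k : ℤ) : ℂ := if 0 ≤ k then qPF a q k.toNat / qPF q q k.toNat else 0

section lim
variable {a v : ℂ} {q z : ℝ} (hq0 : 0 < q) (hq1 : q < 1) (hvq : ‖v * q‖ < 1)
include hq0 hq1

omit hq1 in
lemma zden_norm (hz : 0 < z) (n : ℤ) : ‖(z : ℂ) + (q : ℂ) ^ n‖ = z + q ^ n := by
  rw [← Complex.ofReal_zpow, ← Complex.ofReal_add, Complex.norm_real, Real.norm_of_nonneg]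
  positivity

include hvq

lemma bil_summable (hz : 0 < z) (hv : 1 < ‖v‖) :
    Summable fun μ : ℤ => ‖(v * (q : ℂ)) ^ μ / ((z : ℂ) + (q : ℂ) ^ μ)‖ := by
  have hqn : ‖(q : ℂ)‖ = q := by rw [Complex.norm_real, Real.norm_of_nonneg hq0.le]
  refine Summable.of_nat_of_neg ?_ ?_
  · refine Summable.of_nonneg_of_le (fun _ => norm_nonneg _) (fun n => ?_)
      ((summable_geometric_of_lt_one (norm_nonneg _) hvq).mul_right z⁻¹)
    rw [norm_div, zden_norm hq0 hz, norm_zpow, zpow_natCast, div_eq_mul_inv]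
    gcongr
    have : 0 < q ^ (n : ℤ) := by positivity
    linarith
  · refine Summable.of_nonneg_of_le (fun _ => norm_nonneg _) (fun n => ?_)
      (summable_geometric_of_lt_one (inv_nonneg.mpr (norm_nonneg v)) (inv_lt_one_of_one_lt₀ hv))
    rw [norm_div, zden_norm hq0 hz, norm_zpow, norm_mul, hqn, zpow_neg, zpow_natCast, mul_pow, zpow_neg,
      zpow_natCast]
    have h1 : 0 < q ^ n := by positivity
    have h2 : 0 < ‖v‖ ^ n := by positivity
    rw [div_le_iff₀ (by positivity), inv_pow, mul_inv, mul_add]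
    have : 0 < (‖v‖ ^ n)⁻¹ * z := by positivity
    linarith

lemma F_limit (hz : 0 < z) (hv : 1 < ‖v‖) :
    Tendsto (fun n : ℕ => (v⁻¹) ^ n * FF a v q ((q : ℂ) ^ n * z)) atTop
      (𝓝 (qPI a q / qPI q q * ∑' μ : ℤ, (v * (q : ℂ)) ^ μ / ((z : ℂ) + (q : ℂ) ^ μ))) := by
  have hn := qn_lt hq0 hq1
  have hv0 : v ≠ 0 := by rintro rfl; simp at hv; linarith
  have hq0' : (q : ℂ) ≠ 0 := by exact_mod_cast hq0.ne'
  obtain ⟨M, hM, hb⟩ := qratio_bound' (b := a) (c := (q : ℂ)) hn hn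
  have hrb : ∀ k, ‖rrat a q k‖ ≤ M := by
    intro k
    rw [rrat]
    split_ifs
    · exact hb _
    · simpa using hM.le
  have e : ∀ n : ℕ, (v⁻¹) ^ n * FF a v q ((q : ℂ) ^ n * z) =
      ∑' μ : ℤ, rrat a q (n + μ) * ((v * (q : ℂ)) ^ μ / ((z : ℂ) + (q : ℂ) ^ μ)) := by
    intro n
    rw [← (Equiv.addLeft (-(n : ℤ))).tsum_eq
      (fun μ : ℤ => rrat a q (n + μ) * ((v * (q : ℂ)) ^ μ / ((z : ℂ) + (q : ℂ) ^ μ)))]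
    simp only [Equiv.coe_addLeft, add_neg_cancel_left]
    rw [← (Nat.cast_injective (R := ℤ)).tsum_eq]
    · rw [FF, ← tsum_mul_left]
      refine tsum_congr fun k => ?_
      have hd : (q : ℂ) ^ n * z + (q : ℂ) ^ k ≠ 0 := by
        have := den_ne (z := q ^ n * z) hq0 (by positivity) k
        push_cast at this
        exact this
      have hd2 : (z : ℂ) + (q : ℂ) ^ (-(n : ℤ) + (k : ℤ)) = ((q : ℂ) ^ n * z + (q : ℂ) ^ k) / (q : ℂ) ^ n := by
        rw [zpow_add₀ hq0', zpow_neg, zpow_natCast, zpow_natCast]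
        field_simp
      rw [hd2, rrat, if_pos (by positivity), Int.toNat_natCast, cco,
        zpow_add₀ (mul_ne_zero hv0 hq0'), zpow_neg, zpow_natCast, zpow_natCast, mul_pow, mul_pow, inv_pow]
      generalize qPF a q k / qPF (q : ℂ) q k = R
      field_simp
    · intro k hk
      rw [Function.mem_support] at hk
      by_contra h
      apply hk
      have : ¬ (0 ≤ k) := fun h0 => h ⟨k.toNat, Int.toNat_of_nonneg h0⟩
      rw [rrat, if_neg this, zero_mul]
  simp_rw [e]
  rw [← tsum_mul_left]
  refine tendsto_tsum_of_dominated_convergence ((bil_summable hq0 hq1 hvq hz hv).mul_left M) ?_ ?_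
  · intro μ
    refine Tendsto.mul_const _ ?_
    have h1 : Tendsto (fun k : ℕ => qPF a q k / qPF (q : ℂ) q k) atTop (𝓝 (qPI a q / qPI q q)) :=
      (tendsto_qPF hn a).div (tendsto_qPF hn q) (qPI_ne_zero hn hn)
    have h2 : Tendsto (fun n : ℕ => ((n : ℤ) + μ).toNat) atTop atTop := by
      refine tendsto_atTop.mpr fun b => ?_
      filter_upwards [eventually_ge_atTop (b + (-μ).toNat)] with n hn
      omega
    refine (h1.comp h2).congr' ?_
    filter_upwards [eventually_ge_atTop ((-μ).toNat)] with n hn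
    rw [Function.comp, rrat, if_pos (by omega)]
  · filter_upwards with n μ
    rw [norm_mul]
    gcongr
    exact hrb _

lemma H_formula (ha : a ≠ 0) (hz : 0 < z) (hv : 1 < ‖v‖) (haz : ‖a * z‖ < 1) :
    FF a v q z = qPI (a * v) q / qPI v q * GG a v q z +
      qPI (-(q * z : ℂ)) q / qPI (-(a * z)) q *
        (qPI a q / qPI q q * ∑' μ : ℤ, (v * (q : ℂ)) ^ μ / ((z : ℂ) + (q : ℂ) ^ μ)) := by
  have hn := qn_lt hq0 hq1
  have hv0 : v ≠ 0 := by rintro rfl; simp at hv; linarith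
  have hv1 : 1 - v ≠ 0 := by
    intro h
    have : v = 1 := by linear_combination -h
    rw [this, norm_one] at hv
    linarith
  set K := qPI (a * v) q / qPI v q with hK
  set H : ℕ → ℂ := fun n => FF a v q ((q : ℂ) ^ n * z) - K * GG a v q ((q : ℂ) ^ n * z) with hH
  have hvi : ‖v⁻¹ * (q : ℂ)‖ < 1 := by
    rw [norm_mul, norm_inv]
    have : ‖v‖⁻¹ < 1 := inv_lt_one_of_one_lt₀ hv
    nlinarith [norm_nonneg (q : ℂ), inv_nonneg.mpr (norm_nonneg v)]
  have hstep : ∀ n, (1 + (q : ℂ) * ((q : ℂ) ^ n * z)) * H (n + 1) =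
      v * (1 + a * ((q : ℂ) ^ n * z)) * H n := by
    intro n
    have hz' : 0 < q ^ n * z := by positivity
    have haz' : ‖a * ((q ^ n * z : ℝ) : ℂ)‖ < 1 := by
      have := norm_mul_pow_lt_one hn haz n
      push_cast
      rwa [mul_assoc, mul_comm (z : ℂ)] at this
    have f1 := FF_feq (a := a) hq0 hq1 hvq hz' hv1
    have f2 := GG_feq (a := a) hq0 hq1 ha hv haz'
    push_cast at f1 f2
    rw [← hK] at f1
    simp only [hH]
    rw [pow_succ' (q : ℂ) n, mul_assoc (q : ℂ)]
    linear_combination f1 - K * f2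
  have hit : ∀ n, qPF (-(q * z : ℂ)) q n * (v⁻¹ ^ n * H n) = qPF (-(a * z)) q n * H 0 := by
    intro n
    induction n with
    | zero => simp [qPF_zero]
    | succ n ih =>
      have := hstep n
      rw [qPF_succ, qPF_succ, mul_right_comm _ _ (H 0), ← ih, pow_succ]
      have hvv : v⁻¹ * v = 1 := inv_mul_cancel₀ hv0
      linear_combination qPF (-(q * z : ℂ)) q n * v⁻¹ ^ n * v⁻¹ * this +
        qPF (-(q * z : ℂ)) q n * v⁻¹ ^ n * (1 + a * ((q : ℂ) ^ n * z)) * H n * hvv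
  have hG : Tendsto (fun n : ℕ => GG a v q ((q : ℂ) ^ n * z)) atTop (𝓝 1) := by
    have := tendsto_qbin (a := a⁻¹ * v⁻¹ * q) hn hvi (z := -(a * (z : ℂ))) (by rwa [norm_neg])
    refine this.congr fun n => ?_
    rw [GG]
    refine tsum_congr fun r => ?_
    ring_nf
  have hvn : Tendsto (fun n : ℕ => v⁻¹ ^ n) atTop (𝓝 0) := by
    apply tendsto_pow_atTop_nhds_zero_of_norm_lt_one
    rw [norm_inv]; exact inv_lt_one_of_one_lt₀ hv
  have hlim : Tendsto (fun n : ℕ => v⁻¹ ^ n * H n) atTop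
      (𝓝 (qPI a q / qPI q q * ∑' μ : ℤ, (v * (q : ℂ)) ^ μ / ((z : ℂ) + (q : ℂ) ^ μ))) := by
    have h1 := (F_limit (a := a) hq0 hq1 hvq hz hv).sub (hvn.mul (hG.const_mul K))
    rw [zero_mul, sub_zero] at h1
    refine h1.congr fun n => ?_
    simp only [hH]
    ring
  have hA := (tendsto_qPF hn (-(q * z : ℂ))).mul hlim
  have hB := (tendsto_qPF hn (-(a * z))).mul_const (H 0)
  simp_rw [hit] at hA
  have hfin := tendsto_nhds_unique hA hB
  have hne : qPI (-(a * z)) (q : ℂ) ≠ 0 := qPI_ne_zero hn (by rwa [norm_neg])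
  have hH0 : H 0 = FF a v q z - K * GG a v q z := by simp [hH]
  rw [div_mul_eq_mul_div (qPI (-(q * z : ℂ)) q), hfin, mul_div_cancel_left₀ _ hne, hH0]
  ring

end lim

/-- Fourier coefficient with explicit parameters -/
def pco (g L : ℝ) (k : ℤ) : ℂ :=
  (Real.pi : ℂ) / Complex.sin ((Real.pi : ℂ) * (g : ℂ) +
    2 * Complex.I * (k : ℂ) * (Real.pi : ℂ) ^ 2 / (L : ℂ))

lemma sinh_le_norm_sin (x y : ℝ) : |Real.sinh y| ≤ ‖Complex.sin (x + y * I)‖ := by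
  rw [← Real.sqrt_sq_eq_abs, Complex.norm_eq_sqrt_sq_add_sq]
  apply Real.sqrt_le_sqrt
  have e : Complex.sin (x + y * I) = ((Real.sin x * Real.cosh y : ℝ) : ℂ) +
      ((Real.cos x * Real.sinh y : ℝ) : ℂ) * I := by
    rw [Complex.sin_add_mul_I]; push_cast; ring
  rw [e]
  simp only [Complex.add_re, Complex.add_im, Complex.ofReal_re, Complex.ofReal_im, Complex.mul_re,
    Complex.mul_im, Complex.I_re, Complex.I_im]
  have h1 := Real.cosh_sq y
  have h2 := Real.sin_sq_add_cos_sq x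
  have : 0 ≤ Real.sin x ^ 2 := sq_nonneg _
  have e2 : (Real.sin x * Real.cosh y) ^ 2 + (Real.cos x * Real.sinh y) ^ 2 =
      Real.sin x ^ 2 + Real.sinh y ^ 2 := by
    linear_combination Real.sin x ^ 2 * h1 + Real.sinh y ^ 2 * h2
  ring_nf at e2 ⊢
  linarith

lemma sq_le_abs_sinh (y : ℝ) : y ^ 2 / 4 ≤ |Real.sinh y| := by
  rw [Real.abs_sinh, ← sq_abs]
  set t := |y|
  have ht : 0 ≤ t := abs_nonneg y
  rw [Real.sinh_eq]
  have h1 := Real.quadratic_le_exp_of_nonneg ht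
  have h2 : Real.exp (-t) ≤ 1 := Real.exp_le_one_iff.mpr (by linarith)
  linarith

lemma pco_norm_summable (g : ℝ) {L : ℝ} (hL : 0 < L) : Summable fun k : ℤ => ‖pco g L k‖ := by
  have hs : Summable fun k : ℤ => L ^ 2 / Real.pi ^ 3 * (1 / (k : ℝ) ^ 2) :=
    (Real.summable_one_div_int_pow.mpr (by norm_num)).mul_left _
  refine Summable.of_norm_bounded_eventually hs ?_
  have : ({0} : Set ℤ)ᶜ ∈ cofinite := (Set.finite_singleton 0).compl_mem_cofinite
  filter_upwards [this] with k hk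
  have hk0 : (k : ℝ) ≠ 0 := by simpa using hk
  have hp := Real.pi_pos
  rw [norm_norm, pco, norm_div]
  have e : ((Real.pi : ℂ) * (g : ℂ) + 2 * Complex.I * (k : ℂ) * (Real.pi : ℂ) ^ 2 / (L : ℂ)) =
      ((Real.pi * g : ℝ) : ℂ) + ((2 * k * Real.pi ^ 2 / L : ℝ) : ℂ) * I := by
    push_cast; ring
  rw [e]
  have h1 := (sq_le_abs_sinh (2 * k * Real.pi ^ 2 / L)).trans
    (sinh_le_norm_sin (Real.pi * g) (2 * k * Real.pi ^ 2 / L))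
  have h0 : 0 < (2 * k * Real.pi ^ 2 / L) ^ 2 / 4 := by positivity
  rw [Complex.norm_real, Real.norm_of_nonneg hp.le]
  refine (div_le_div_of_nonneg_left hp.le h0 h1).trans (le_of_eq ?_)
  field_simp
  norm_num

lemma logistic_integral {u : ℂ} (h0 : 0 < u.re) (h1 : u.re < 1) :
    ∫ x : ℝ, Complex.exp (u * x) / ((1 + Real.exp x : ℝ) : ℂ) = Real.pi / Complex.sin (Real.pi * u) := by
  have hB := Complex.betaIntegral_eq_Gamma_mul_div u (1 - u) h0 (by simp; linarith)
  rw [Complex.Gamma_mul_Gamma_one_sub, add_sub_cancel, Complex.Gamma_one, div_one] at hB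
  rw [← hB, Complex.betaIntegral, intervalIntegral.integral_of_le zero_le_one,
    MeasureTheory.integral_Ioc_eq_integral_Ioo, ← Real.range_sigmoid, ← Set.image_univ,
    MeasureTheory.integral_image_eq_integral_abs_deriv_smul MeasurableSet.univ
      (fun x _ => (Real.hasDerivAt_sigmoid x).hasDerivWithinAt) Real.sigmoid_injective.injOn,
    MeasureTheory.setIntegral_univ]
  congr 1 with x
  have hs : 0 < Real.sigmoid x := Real.sigmoid_pos x
  have hs1 : 0 < 1 - Real.sigmoid x := by linarith [Real.sigmoid_lt_one x]
  have hex : 0 < Real.exp x := Real.exp_pos x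
  have e1 : 1 - Real.sigmoid x = (1 + Real.exp x)⁻¹ := by
    rw [← Real.sigmoid_neg, Real.sigmoid_def, neg_neg]
  have e2 : Real.sigmoid x = Real.exp x * (1 - Real.sigmoid x) := by
    rw [e1, Real.sigmoid_def, Real.exp_neg]
    field_simp
    ring
  have hc : (1 : ℂ) - (Real.sigmoid x : ℂ) = ((1 - Real.sigmoid x : ℝ) : ℂ) := by push_cast; ring
  rw [abs_of_pos (by positivity), Complex.real_smul, hc]
  have a1 : ((Real.sigmoid x : ℝ) : ℂ) ^ (u - 1) =
      Complex.exp (u * x) * Complex.exp (-x) * ((1 - Real.sigmoid x : ℝ) : ℂ) ^ (u - 1) := by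
    conv_lhs => rw [e2]
    rw [Complex.ofReal_mul, Complex.mul_cpow_ofReal_nonneg hex.le hs1.le, ← Complex.exp_add]
    congr 1
    rw [Complex.cpow_def_of_ne_zero (by exact_mod_cast hex.ne'), ← Complex.ofReal_log hex.le,
      Real.log_exp]
    congr 1; ring
  have hne : ((1 - Real.sigmoid x : ℝ) : ℂ) ≠ 0 := by exact_mod_cast hs1.ne'
  have a2 : ((1 - Real.sigmoid x : ℝ) : ℂ) ^ (u - 1) * ((1 - Real.sigmoid x : ℝ) : ℂ) ^ (1 - u - 1) =
      ((1 - Real.sigmoid x : ℝ) : ℂ)⁻¹ := by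
    rw [← Complex.cpow_add _ _ hne, ← Complex.cpow_neg_one]
    congr 1; ring
  rw [a1, mul_assoc (Complex.exp (u * x) * Complex.exp (-x)), a2, Complex.ofReal_mul]
  have e3 : ((Real.sigmoid x : ℝ) : ℂ) = Complex.exp x * ((1 - Real.sigmoid x : ℝ) : ℂ) := by
    conv_lhs => rw [e2]
    push_cast; ring
  have e4 : ((1 + Real.exp x : ℝ) : ℂ) = (((1 - Real.sigmoid x : ℝ) : ℂ))⁻¹ := by
    rw [e1]; push_cast; rw [inv_inv]
  rw [e4, e3, Complex.exp_neg]
  have := Complex.exp_ne_zero x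
  field_simp

/-- the function to which Poisson summation is applied -/
def phi (g L : ℝ) (x : ℝ) : ℂ := ((Real.exp (g * L * x) / (1 + Real.exp (L * x)) : ℝ) : ℂ)

lemma phi_cont (g L : ℝ) : Continuous (phi g L) := by
  refine Complex.continuous_ofReal.comp ?_
  refine Continuous.div (by fun_prop) (by fun_prop) (fun x => by positivity)

lemma phi_decay {g L : ℝ} (hL : 0 < L) (h0 : 0 < g) (h1 : g < 1) :
    phi g L =O[cocompact ℝ] fun x : ℝ => |x| ^ (-2 : ℝ) := by
  rw [cocompact_eq_atBot_atTop, isBigO_sup]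
  have hpos : (fun x : ℝ => x ^ (-2 : ℝ)) =ᶠ[atTop] fun x : ℝ => |x| ^ (-2 : ℝ) := by
    filter_upwards [eventually_ge_atTop 0] with x hx
    rw [abs_of_nonneg hx]
  constructor
  · have hb : 0 < g * L := by positivity
    have A := ((isLittleO_exp_neg_mul_rpow_atTop hb (-2)).isBigO.trans_eventuallyEq hpos).comp_tendsto
      tendsto_neg_atBot_atTop
    have e : ((fun x : ℝ => |x| ^ (-2 : ℝ)) ∘ Neg.neg) = fun x : ℝ => |x| ^ (-2 : ℝ) := by
      funext x; simp
    rw [e] at A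
    refine (isBigO_of_le _ fun x => ?_).trans A
    rw [phi, Complex.norm_real, Function.comp, Real.norm_of_nonneg (by positivity),
      Real.norm_of_nonneg (by positivity), neg_mul_neg]
    exact div_le_self (by positivity) (by linarith [Real.exp_pos (L * x)])
  · have hb : 0 < (1 - g) * L := mul_pos (by linarith) hL
    have A := (isLittleO_exp_neg_mul_rpow_atTop hb (-2)).isBigO.trans_eventuallyEq hpos
    refine (isBigO_of_le _ fun x => ?_).trans A
    rw [phi, Complex.norm_real, Real.norm_of_nonneg (by positivity),
      Real.norm_of_nonneg (by positivity), div_le_iff₀ (by positivity), mul_add, ← Real.exp_add]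
    have : -((1 - g) * L) * x + L * x = g * L * x := by ring
    rw [this]
    have := Real.exp_pos (-((1 - g) * L) * x)
    linarith

open FourierTransform in
lemma phi_fourier {g L : ℝ} (hL : 0 < L) (h0 : 0 < g) (h1 : g < 1) (k : ℤ) :
    𝓕 (phi g L) (k : ℝ) = pco g L (-k) / L := by
  rw [Real.fourier_real_eq_integral_exp_smul]
  set u : ℂ := g - 2 * Real.pi * I * k / L with hu
  have hL' : (L : ℂ) ≠ 0 := by exact_mod_cast hL.ne'
  have hur : u.re = g := by
    have : u = (g : ℂ) + ((-(2 * Real.pi * k / L) : ℝ) : ℂ) * I := by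
      rw [hu]; push_cast; ring
    rw [this]; simp
  have hI := logistic_integral (u := u) (by rw [hur]; exact h0) (by rw [hur]; exact h1)
  have e : ∀ x : ℝ, Complex.exp (↑(-2 * Real.pi * x * (k : ℝ)) * I) • phi g L x =
      (fun y : ℝ => Complex.exp (u * y) / ((1 + Real.exp y : ℝ) : ℂ)) (L * x) := by
    intro x
    simp only [phi, smul_eq_mul]
    rw [Complex.ofReal_div, ← mul_div_assoc, Complex.ofReal_exp, ← Complex.exp_add]
    congr 2
    rw [hu]
    push_cast
    field_simp
    ring
  rw [MeasureTheory.integral_congr_ae (Eventually.of_forall e),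
    MeasureTheory.Measure.integral_comp_mul_left
      (fun y : ℝ => Complex.exp (u * y) / ((1 + Real.exp y : ℝ) : ℂ)) L, hI, abs_of_pos (inv_pos.mpr hL), Complex.real_smul, pco]
  have e2 : (Real.pi : ℂ) * u = (Real.pi : ℂ) * (g : ℂ) +
    2 * Complex.I * ((-k : ℤ) : ℂ) * (Real.pi : ℂ) ^ 2 / (L : ℂ) := by
    rw [hu]; push_cast; ring
  rw [e2]; push_cast; ring

lemma poisson_phi {g L : ℝ} (hL : 0 < L) (h0 : 0 < g) (h1 : g < 1) (w : ℝ) :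
    ∑' n : ℤ, phi g L (w + n) =
      (1 / L) * ∑' k : ℤ, pco g L k * Complex.exp (-2 * Real.pi * I * k * w) := by
  have hs : Summable fun k : ℤ => pco g L (-k) / L :=
    (((pco_norm_summable g hL).of_norm.comp_injective neg_injective)).div_const _
  rw [Real.tsum_eq_tsum_fourier_of_rpow_decay_of_summable (phi_cont g L) one_lt_two
    (phi_decay hL h0 h1) (by simpa only [phi_fourier hL h0 h1] using hs) w,
    ← (Equiv.neg ℤ).tsum_eq, ← tsum_mul_left]
  refine tsum_congr fun k => ?_
  rw [phi_fourier hL h0 h1, fourier_coe_apply, Equiv.neg_apply, neg_neg]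
  push_cast
  have : 2 * (Real.pi : ℂ) * I * -k * w / 1 = -2 * Real.pi * I * k * w := by ring
  rw [this]; ring

lemma exp_int_mul_aux (n : ℤ) (x : ℝ) : Real.exp (n * x) = Real.exp x ^ n := by
  rw [mul_comm, Real.exp_mul, Real.rpow_intCast]

lemma bil_poisson {q g z : ℝ} (hq0 : 0 < q) (hq1 : q < 1) (h0 : 0 < g) (h1 : g < 1) (hz : 0 < z)
    {v : ℝ} (hv : v = q ^ (-g)) :
    ∑' μ : ℤ, ((v : ℂ) * (q : ℂ)) ^ μ / ((z : ℂ) + (q : ℂ) ^ μ) =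
      ((z ^ (-g) : ℝ) : ℂ) * ((1 / (Real.log (1 / q) : ℂ)) * ∑' k : ℤ, pco g (Real.log (1 / q)) k *
        Complex.exp (-2 * Real.pi * I * k * (Real.log z / Real.log (1 / q) : ℝ))) := by
  have hL : 0 < Real.log (1 / q) := Real.log_pos ((one_lt_div hq0).mpr hq1)
  rw [← poisson_phi hL h0 h1, ← tsum_mul_left]
  refine tsum_congr fun n => ?_
  have hLq : Real.log (1 / q) = -Real.log q := by rw [one_div, Real.log_inv]
  set L := Real.log (1 / q) with hLd
  have e1 : Real.exp (L * (Real.log z / L + n)) = z * (q ^ n)⁻¹ := by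
    have : L * (Real.log z / L + n) = Real.log z + -(n * Real.log q) := by
      field_simp
      rw [hLq]; ring
    rw [this, Real.exp_add, Real.exp_log hz, Real.exp_neg, exp_int_mul_aux, Real.exp_log hq0]
  have e2 : Real.exp (g * L * (Real.log z / L + n)) = z ^ g * v ^ n := by
    have : g * L * (Real.log z / L + n) = Real.log z * g + n * (Real.log q * -g) := by
      field_simp
      rw [hLq]; ring
    rw [this, Real.exp_add, Real.rpow_def_of_pos hz, exp_int_mul_aux, hv, Real.rpow_def_of_pos hq0]
  rw [phi, e1, e2, ← Complex.ofReal_mul, ← Complex.ofReal_mul, ← Complex.ofReal_zpow,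
    ← Complex.ofReal_zpow, ← Complex.ofReal_add, ← Complex.ofReal_div]
  congr 1
  have hzg : z ^ (-g) * z ^ g = 1 := by rw [← Real.rpow_add hz]; simp
  have hqn : 0 < q ^ n := by positivity
  rw [mul_div_assoc', ← mul_assoc, hzg, one_mul, mul_zpow]
  field_simp
  ring

section assembly
variable {q : ℝ} (h0 : 2 / 5 < q) (h1 : q < 1 / 2)
include h0 h1

lemma logq_pos : 0 < Real.log (1 / q) :=
  Real.log_pos ((one_lt_div (by linarith)).mpr (by linarith))

lemma gammaR_pos : 0 < gammaR q :=
  div_pos (Real.log_pos (vR_gt h0 h1)) (logq_pos h0 h1)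

lemma gammaR_lt : gammaR q < 1 := by
  have hv := vR_gt h0 h1
  rw [gammaR, div_lt_one (logq_pos h0 h1)]
  apply Real.log_lt_log (by linarith)
  rw [lt_div_iff₀ (by linarith)]
  nlinarith [vR_lt h0 h1]

lemma vR_eq : vR q = q ^ (-gammaR q) := by
  have hv := vR_gt h0 h1
  have hL := logq_pos h0 h1
  have hq : 0 < q := by linarith
  have hLq : Real.log (1 / q) = -Real.log q := by rw [one_div, Real.log_inv]
  rw [Real.rpow_def_of_pos hq, gammaR]
  have : Real.log q = -Real.log (1 / q) := by rw [hLq, neg_neg]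
  rw [this]
  have e : -Real.log (1 / q) * -(Real.log (vR q) / Real.log (1 / q)) = Real.log (vR q) := by
    field_simp
  rw [e, Real.exp_log (by linarith)]

lemma Psummable (w : ℝ) : Summable (fun k : ℤ => ‖pcoefR q k *
    Complex.exp (-2 * (Real.pi : ℂ) * Complex.I * (k : ℂ) * (w : ℂ))‖) := by
  refine (pco_norm_summable (gammaR q) (logq_pos h0 h1)).congr fun k => ?_
  have e : -2 * (Real.pi : ℂ) * Complex.I * (k : ℂ) * (w : ℂ) =
      ((-2 * Real.pi * k * w : ℝ) : ℂ) * I := by push_cast; ring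
  rw [norm_mul, e, Complex.norm_exp_ofReal_mul_I, mul_one]
  rfl

lemma vnorm : 1 < ‖vF (q : ℂ)‖ := by
  have hv := vR_gt h0 h1
  rw [vF_real, Complex.norm_real, Real.norm_of_nonneg (by linarith)]
  exact hv

lemma viq_norm : ‖(vF (q : ℂ))⁻¹ * (q : ℂ)‖ < 1 := by
  have h := inv_lt_one_of_one_lt₀ (vnorm h0 h1)
  have hn := rq_norm h0 h1
  rw [norm_mul, norm_inv]
  nlinarith [norm_nonneg (q : ℂ), inv_nonneg.mpr (norm_nonneg (vF (q : ℂ)))]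

lemma az_norm : ‖aF (q : ℂ) * (((1 - 2 * q) / q ^ 2 : ℝ) : ℂ)‖ < 1 := by
  have ha := aR_lt h0 h1
  have ha0 := aR_pos h0 h1
  have hq : 0 < q := by linarith
  have hz0 : 0 < (1 - 2 * q) / q ^ 2 := div_pos (by linarith) (by positivity)
  have hz : (1 - 2 * q) / q ^ 2 < 2 := by
    rw [div_lt_iff₀ (by positivity)]; nlinarith
  rw [aF_real, ← Complex.ofReal_mul, Complex.norm_real, Real.norm_of_nonneg (by positivity)]
  nlinarith

lemma Vterm_eq (r : ℕ) : Vterm q r =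
    qPF ((aF q)⁻¹ * (vF q)⁻¹ * q) (q : ℂ) r / qPF ((vF q)⁻¹ * q) (q : ℂ) r *
      (-(aF (q : ℂ) * (((1 - 2 * q) / q ^ 2 : ℝ) : ℂ))) ^ r := by
  rw [Vterm]
  congr 2
  push_cast
  ring

lemma Vsummable : Summable (fun r : ℕ => ‖Vterm q r‖) := by
  simp_rw [Vterm_eq h0 h1]
  exact summable_qbin (hf_lt (rq_norm h0 h1)) (viq_norm h0 h1) (by rw [norm_neg]; exact az_norm h0 h1)

lemma S_eq : ∑' ν, Sterm (q : ℂ) ν =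
    1 / (q : ℂ) ^ 2 * FF (aF q) (vF q) q (((1 - 2 * q) / q ^ 2 : ℝ) : ℂ) := by
  rw [FF, ← tsum_mul_left]
  refine tsum_congr fun n => ?_
  have hq := rq_ne h0 h1
  rw [Sterm, cco]
  have e : 1 - 2 * (q : ℂ) + (q : ℂ) ^ (n + 2) =
      (q : ℂ) ^ 2 * ((((1 - 2 * q) / q ^ 2 : ℝ) : ℂ) + (q : ℂ) ^ n) := by
    push_cast
    field_simp
    ring
  rw [e]
  generalize qPF (aF q) q n / qPF (q : ℂ) q n * (vF q * q) ^ n = X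
  rw [div_mul_div_comm, one_mul]

lemma Pi_shift : PiR q (Real.log (1 - 2 * q) / Real.log (1 / q)) =
    ∑' k : ℤ, pco (gammaR q) (Real.log (1 / q)) k *
      Complex.exp (-2 * Real.pi * I * k *
        (Real.log ((1 - 2 * q) / q ^ 2) / Real.log (1 / q) : ℝ)) := by
  rw [PiR]
  refine tsum_congr fun k => ?_
  have hL := logq_pos h0 h1
  have hq : 0 < q := by linarith
  have hLq : Real.log q = -Real.log (1 / q) := by rw [one_div, Real.log_inv, neg_neg]
  have e : Real.log ((1 - 2 * q) / q ^ 2) / Real.log (1 / q) =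
      Real.log (1 - 2 * q) / Real.log (1 / q) + 2 := by
    rw [Real.log_div (by linarith) (by positivity), Real.log_pow, hLq]
    field_simp
    push_cast
    ring
  rw [e, Complex.ofReal_add]
  have e2 : -2 * (Real.pi : ℂ) * I * k * (((Real.log (1 - 2 * q) / Real.log (1 / q) : ℝ) : ℂ) + ((2 : ℝ) : ℂ)) =
      -2 * (Real.pi : ℂ) * I * k * ((Real.log (1 - 2 * q) / Real.log (1 / q) : ℝ) : ℂ) +
        ((-2 * k : ℤ) : ℂ) * (2 * Real.pi * I) := by
    push_cast; ring
  rw [e2, Complex.exp_add, Complex.exp_int_mul_two_pi_mul_I, mul_one]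
  rfl

lemma pref_eq : (1 / q ^ 2) * ((1 - 2 * q) / q ^ 2) ^ (-gammaR q) * (1 / Real.log (1 / q)) =
    (1 - 2 * q) ^ (-gammaR q) * (vR q * q ^ (3 * gammaR q - 2) / Real.log (1 / q)) := by
  have hq : 0 < q := by linarith
  rw [vR_eq h0 h1, Real.div_rpow (by linarith) (by positivity), ← Real.rpow_add hq,
    ← Real.rpow_natCast, ← Real.rpow_mul hq.le, one_div (q ^ ((2 : ℕ) : ℝ)), ← Real.rpow_neg hq.le,
    div_eq_mul_inv _ (q ^ (((2 : ℕ) : ℝ) * -gammaR q)), ← Real.rpow_neg hq.le (((2 : ℕ) : ℝ) * -gammaR q)]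
  have e : -gammaR q + (3 * gammaR q - 2) = -((2 : ℕ) : ℝ) + -(((2 : ℕ) : ℝ) * -gammaR q) := by
    push_cast; ring
  rw [e, Real.rpow_add hq]
  ring

lemma T_final : (∑' p : ℕ × ℕ, Tterm (q : ℂ) (p.1 + 1) p.2) =
    (((1 - 2 * q) ^ (-(gammaR q)) : ℝ) : ℂ) *
      PiR q (Real.log (1 - 2 * q) / Real.log (1 / q)) * Ufun q + Vfun q := by
  have hq : 0 < q := by linarith
  have hq' := rq_ne h0 h1
  have hn := rq_norm h0 h1
  have hn1 := hf_lt hn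
  have hz : 0 < (1 - 2 * q) / q ^ 2 := div_pos (by linarith) (by positivity)
  have hA : qPI (aF q) (q : ℂ) ≠ 0 := qPI_ne_zero hn1 ((aF_lt h0 h1).trans (by norm_num))
  have hQ : qPI (q : ℂ) (q : ℂ) ≠ 0 := qPI_ne_zero hn1 hn1
  have hvq : ‖vF (q : ℂ) * q‖ < 1 := by
    have hv := vR_gt h0 h1
    rw [vF_real, ← Complex.ofReal_mul, Complex.norm_real, Real.norm_of_nonneg (by positivity)]
    nlinarith [vR_lt h0 h1]
  have hbp := bil_poisson hq (by linarith) (gammaR_pos h0 h1) (gammaR_lt h0 h1) hz (vR_eq h0 h1)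
  rw [← Pi_shift h0 h1, ← vF_real] at hbp
  have hG : GG (aF q) (vF q) q (((1 - 2 * q) / q ^ 2 : ℝ) : ℂ) = ∑' r, Vterm q r := by
    rw [GG]
    exact tsum_congr fun r => (Vterm_eq h0 h1 r).symm
  have hU1 : -(((1 - 2 * q) / q : ℝ) : ℂ) = -((q : ℂ) * (((1 - 2 * q) / q ^ 2 : ℝ) : ℂ)) := by
    push_cast; field_simp
  have hU2 : -((aR q * (1 - 2 * q) / q ^ 2 : ℝ) : ℂ) =
      -(aF (q : ℂ) * (((1 - 2 * q) / q ^ 2 : ℝ) : ℂ)) := by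
    rw [aF_real]; push_cast; ring
  have hp := congrArg (fun x : ℝ => (x : ℂ)) (pref_eq h0 h1)
  simp only [Complex.ofReal_mul] at hp
  rw [T_eq h0 h1, S_eq h0 h1,
    H_formula hq (by linarith) hvq (aF_ne h0 h1) hz (vnorm h0 h1) (az_norm h0 h1), hbp, hG,
    Ufun, hU1, hU2, Vfun]
  generalize PiR q (Real.log (1 - 2 * q) / Real.log (1 / q)) = PP
  generalize qPI (-((q : ℂ) * (((1 - 2 * q) / q ^ 2 : ℝ) : ℂ))) (q : ℂ) /
    qPI (-(aF (q : ℂ) * (((1 - 2 * q) / q ^ 2 : ℝ) : ℂ))) (q : ℂ) = RR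
  generalize ∑' r, Vterm q r = VV
  have hd : (1 / (q : ℂ) ^ 2) / (1 + (1 - 2 * (q : ℂ)) / (q : ℂ) ^ 2) =
      1 / (1 - 2 * (q : ℂ) + (q : ℂ) ^ 2) := by
    have e : 1 + (1 - 2 * (q : ℂ)) / (q : ℂ) ^ 2 = (1 - 2 * (q : ℂ) + (q : ℂ) ^ 2) / (q : ℂ) ^ 2 := by
      field_simp; ring
    rw [e, div_div_div_cancel_right₀ (pow_ne_zero 2 hq')]
  have hc : qPI (q : ℂ) q / qPI (aF q) q * (qPI (aF q) q / qPI (q : ℂ) q) = 1 := by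
    field_simp
  have hs : qPI (q : ℂ) q * qPI (aF q * vF q) (q : ℂ) / (qPI (aF q) (q : ℂ) * qPI (vF q) (q : ℂ)) =
      qPI (q : ℂ) q / qPI (aF q) q * (qPI (aF q * vF q) (q : ℂ) / qPI (vF q) (q : ℂ)) := by
    rw [div_mul_div_comm]
  rw [hd, hs]
  have hp2 : 1 / (q : ℂ) ^ 2 * ((((1 - 2 * q) / q ^ 2) ^ (-gammaR q) : ℝ) : ℂ) *
      (1 / (Real.log (1 / q) : ℂ)) = (((1 - 2 * q) ^ (-(gammaR q)) : ℝ) : ℂ) *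
      ((vR q * q ^ (3 * gammaR q - 2) / Real.log (1 / q) : ℝ) : ℂ) := by
    have := congrArg (fun x : ℝ => (x : ℂ)) (pref_eq h0 h1)
    rw [← Complex.ofReal_mul, ← this]
    push_cast
    rfl
  linear_combination (1 / (q : ℂ) ^ 2 * ((((1 - 2 * q) / q ^ 2) ^ (-gammaR q) : ℝ) : ℂ) *
      (1 / (Real.log (1 / q) : ℂ)) * RR * PP) * hc + RR * PP * hp2

end assembly

/-- For real `q < 1/2` close enough to `1/2`, the analytic continuation of `PA`
satisfies `PA(q) = D(q) - q²A(q)·((a;q)_∞(v;q)_∞/((q;q)_∞(av;q)_∞))·T(q)` and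
`T(q) = (1-2q)^{-γ} Π(log(1-2q)/log(1/q)) U(q) + V(q)`. -/
theorem PA_singular_regular_decomposition_real :
    ∃ f : ℂ → ℂ,
      AnalyticOnNhd ℂ f {z : ℂ | z.im = 0 ∧ 0 < z.re ∧ z.re < 1 / 2} ∧
      (∀ z : ℂ, ‖z‖ < 1 / 10 → f z = PAseries z) ∧
      ∃ ε : ℝ, 0 < ε ∧
        ∀ q : ℝ, 1 / 2 - ε < q → q < 1 / 2 →
          Summable (fun p : ℕ × ℕ => ‖Tterm (q : ℂ) (p.1 + 1) p.2‖) ∧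
          Summable (fun k : ℤ => ‖pcoefR q k *
            Complex.exp (-2 * (Real.pi : ℂ) * Complex.I * (k : ℂ) *
              ((Real.log (1 - 2 * q) / Real.log (1 / q) : ℝ) : ℂ))‖) ∧
          Summable (fun r : ℕ => ‖Vterm q r‖) ∧
          f (q : ℂ) =
            DF (q : ℂ) - (q : ℂ) ^ 2 * AF (q : ℂ) *
              (qPI (aF q) q * qPI (vF q) q /
                (qPI (q : ℂ) q * qPI (aF q * vF q) q)) *
              (∑' p : ℕ × ℕ, Tterm (q : ℂ) (p.1 + 1) p.2) ∧
          (∑' p : ℕ × ℕ, Tterm (q : ℂ) (p.1 + 1) p.2) =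
            (((1 - 2 * q) ^ (-(gammaR q)) : ℝ) : ℂ) *
              PiR q (Real.log (1 - 2 * q) / Real.log (1 / q)) * Ufun q +
              Vfun q := by
  refine ⟨fPA, fPA_analytic, fun z hz => PAseries_eq hz, 1 / 10, by norm_num, ?_⟩
  intro q hq0 hq1
  have h0 : 2 / 5 < q := by linarith
  exact ⟨Tsummable h0 hq1, Psummable h0 hq1 _, Vsummable h0 hq1, fPA_eq h0 hq1, T_final h0 hq1⟩
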